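/- arXiv:1802.02549 — 2 statements merged into one kernel-verified Lean document; each statement's English description precedes it below -/
import Mathlib

section
/- A strong homotopy equivalence between two dg algebras A and B over a commutative ring k induces a bijection MChmod(A) ≅ MChmod(B) between their Maurer-Cartan homotopy moduli sets. -/
open DirectSum

/-- A (cohomologically graded) differential graded algebra over a commutative ring `k`:
a `ℤ`-graded `k`-algebra equipped with a square-zero degree `+1` differential
satisfying the graded Leibniz rule. -/
structure DGA (k : Type) [CommRing k] : Type 1 where
  A : Type
  [ringA : Ring A]
  [algA : Algebra k A]
  gr : ℤ → Submodule k A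
  [gradedA : GradedRing gr]
  d : A →ₗ[k] A
  d_sq : ∀ a, d (d a) = 0
  d_mem : ∀ (i : ℤ), ∀ a ∈ gr i, d a ∈ gr (i + 1)
  leibniz : ∀ (i : ℤ), ∀ a ∈ gr i, ∀ b, d (a * b) = d a * b + (((-1 : ℤˣ) ^ i : ℤˣ) : ℤ) • (a * d b)

attribute [instance] DGA.ringA DGA.algA DGA.gradedA

namespace DGA

variable {k : Type} [CommRing k]

/-- A Maurer-Cartan element of a dg algebra: a degree `1` element `x` with `d x + x² = 0`. -/
def IsMC (A : DGA k) (x : A.A) : Prop := x ∈ A.gr 1 ∧ A.d x + x * x = 0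

/-- The set of Maurer-Cartan elements of `A`. -/
def MCEl (A : DGA k) : Type := {x : A.A // A.IsMC x}

/-- The gauge action of an invertible element `g` on `x`:  `g·x = g x g⁻¹ - (d g) g⁻¹`. -/
def GaugeAct (A : DGA k) (g : (A.A)ˣ) (x : A.A) : A.A :=
  (g : A.A) * x * ((g⁻¹ : (A.A)ˣ) : A.A) - A.d (g : A.A) * ((g⁻¹ : (A.A)ˣ) : A.A)

/-- Gauge equivalence of elements of a dg algebra: `y = g·x` for some invertible
degree-zero `g`. -/
def GaugeEquiv (A : DGA k) (x y : A.A) : Prop :=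
  ∃ g : (A.A)ˣ, (g : A.A) ∈ A.gr 0 ∧ y = A.GaugeAct g x

/-- The Maurer-Cartan moduli set: Maurer-Cartan elements modulo gauge equivalence. -/
def MCmod (A : DGA k) : Type := Quot (fun x y : A.MCEl => A.GaugeEquiv x.1 y.1)

/-- `a` is cohomologous to `1` in the twisted algebra `A^x` (with differential `d + [x,-]`);
here `a` has degree `0` so the twisted differential of the degree `-1` element `s`
is `d s + x s + s x`. -/
def CohomologousToOne (A : DGA k) (x a : A.A) : Prop :=
  ∃ s ∈ A.gr (-1 : ℤ), a - 1 = A.d s + (x * s + s * x)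

/-- Homotopy gauge equivalence of Maurer-Cartan elements: the one-sided twisted modules
`A^{[x]}` and `A^{[y]}` are homotopy equivalent as right dg `A`-modules, explicitly:
there are degree-zero `g`, `h` intertwining the twisted differentials whose composites
are cohomologous to `1` in `A^x`, resp. `A^y`. -/
def HomotopyGaugeEquiv (A : DGA k) (x y : A.A) : Prop :=
  ∃ g ∈ A.gr 0, ∃ h ∈ A.gr 0,
    A.d g + y * g - g * x = 0 ∧
    A.d h + x * h - h * y = 0 ∧
    A.CohomologousToOne x (h * g) ∧
    A.CohomologousToOne y (g * h)

/-- The Maurer-Cartan homotopy moduli set: MC elements modulo homotopy gauge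
equivalence. -/
def MChmod (A : DGA k) : Type := Quot (fun x y : A.MCEl => A.HomotopyGaugeEquiv x.1 y.1)

open scoped Classical in
/-- The parity (Koszul sign) operator of a graded algebra: `a ↦ Σᵢ (-1)ⁱ aᵢ`. -/
noncomputable def parity (A : DGA k) (a : A.A) : A.A :=
  (DirectSum.decompose A.gr a).sum (fun i x => (((-1 : ℤˣ) ^ i : ℤˣ) : ℤ) • (x : A.A))

end DGA

/-- A morphism of dg algebras: an algebra map preserving the grading and the differential. -/
structure DGAHom {k : Type} [CommRing k] (A B : DGA k) where
  toFun : A.A →ₐ[k] B.A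
  map_gr : ∀ (i : ℤ), ∀ a ∈ A.gr i, toFun a ∈ B.gr i
  map_d : ∀ a, toFun (A.d a) = B.d (toFun a)

namespace DGAHom
variable {k : Type} [CommRing k]

def comp {A B C : DGA k} (g : DGAHom B C) (f : DGAHom A B) : DGAHom A C where
  toFun := g.toFun.comp f.toFun
  map_gr := fun i a ha => g.map_gr i _ (f.map_gr i a ha)
  map_d := fun a => by simp [f.map_d, g.map_d]

def id' (A : DGA k) : DGAHom A A :=
  ⟨AlgHom.id k A.A, fun _ _ h => h, fun _ => rfl⟩

end DGAHom


/-! ## Topological simplices and singular simplices -/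

/-- The standard topological `n`-simplex. -/
def TopSimplex (n : ℕ) : Type :=
  {f : Fin (n + 1) → ℝ // (∀ i, 0 ≤ f i) ∧ ∑ i, f i = 1}

instance (n : ℕ) : TopologicalSpace (TopSimplex n) :=
  inferInstanceAs (TopologicalSpace {f : Fin (n + 1) → ℝ // (∀ i, 0 ≤ f i) ∧ ∑ i, f i = 1})

/-- The affine map of topological simplices induced by a map of vertices. -/
def vertAffine {m n : ℕ} (v : Fin (m + 1) → Fin (n + 1)) :
    C(TopSimplex m, TopSimplex n) where
  toFun f := ⟨fun j => ∑ i ∈ Finset.univ.filter (fun i => v i = j), f.1 i,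
    ⟨fun j => Finset.sum_nonneg fun i _ => f.2.1 i, by
      rw [Finset.sum_fiberwise_of_maps_to (fun i _ => Finset.mem_univ (v i)) f.1]
      exact f.2.2⟩⟩
  continuous_toFun := by
    apply Continuous.subtype_mk
    exact continuous_pi fun j => continuous_finset_sum _ fun i _ =>
      (continuous_apply i).comp continuous_subtype_val

/-- The `i`-th face inclusion of topological simplices. -/
def faceMap {n : ℕ} (i : Fin (n + 2)) : C(TopSimplex n, TopSimplex (n + 1)) :=
  vertAffine fun j => i.succAbove j

/-- The `i`-th degeneracy (collapse) map of topological simplices. -/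
def degenMap {n : ℕ} (i : Fin (n + 1)) : C(TopSimplex (n + 1), TopSimplex n) :=
  vertAffine fun j => i.predAbove j

/-- The inclusion of the front `p`-face of the `n`-simplex. -/
def frontMap (p n : ℕ) (h : p ≤ n) : C(TopSimplex p, TopSimplex n) :=
  vertAffine fun j => Fin.castLE (by omega) j

/-- The inclusion of the back `q`-face of the `n`-simplex. -/
def backMap (q n : ℕ) (h : q ≤ n) : C(TopSimplex q, TopSimplex n) :=
  vertAffine fun j : Fin (q + 1) => (⟨n - q + (j : ℕ), by have := j.isLt; omega⟩ : Fin (n + 1))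

/-- The `j`-th vertex of the topological `n`-simplex. -/
def vertexPt (n : ℕ) (j : Fin (n + 1)) : TopSimplex n :=
  ⟨fun i => if i = j then 1 else 0,
    ⟨fun i => by dsimp only; split <;> norm_num, by simp⟩⟩

/-- The set of singular `n`-simplices of a topological space. -/
def SingN (X : Type) [TopologicalSpace X] (n : ℕ) : Type := C(TopSimplex n, X)

/-- A singular `(n+1)`-simplex is degenerate if it factors through a degeneracy map. -/
def IsDegenSimplex {X : Type} [TopologicalSpace X] {n : ℕ} (σ : SingN X (n + 1)) : Prop :=
  ∃ (i : Fin (n + 1)) (τ : SingN X n), σ = (τ : C(TopSimplex n, X)).comp (degenMap i)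

/-- The constant singular `0`-simplex of `[0,1]` at `0`. -/
def const0 : SingN unitInterval 0 := ContinuousMap.const _ 0

/-- The constant singular `0`-simplex of `[0,1]` at `1`. -/
def const1 : SingN unitInterval 0 := ContinuousMap.const _ 1

/-! ## Strong homotopy of dg algebra morphisms -/

/-- An elementary strong homotopy between two dg algebra maps `f, g : A → B`: a dg
algebra map `H : A → B ⊗ I*` (where `I*` is the normalized singular cochain algebra of
`[0,1]`, the tensor product being completed) restricting to `f` and `g` at the two
endpoints.  `B ⊗ I*` is identified with normalized `B`-valued singular cochains on
`[0,1]`, so `H` is given by its components `H a n σ ∈ B^{i-n}` for `a ∈ A^i` and `σ` a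
singular `n`-simplex; multiplicativity is the Alexander-Whitney convolution formula
with Koszul signs, and compatibility with differentials uses the singular coboundary. -/
def IsElemStrongHomotopy {k : Type} [CommRing k] (A B : DGA k) (f g : A.A → B.A)
    (H : A.A → ∀ n, SingN unitInterval n → B.A) : Prop :=
  (∀ a b n σ, H (a + b) n σ = H a n σ + H b n σ) ∧
  (∀ (c : k) a n σ, H (c • a) n σ = c • H a n σ) ∧
  (∀ a (n : ℕ) (i : Fin (n + 1)) (τ : SingN unitInterval n),
    H a (n + 1) (ContinuousMap.comp τ (degenMap i)) = 0) ∧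
  (∀ (i : ℤ), ∀ a ∈ A.gr i, ∀ (n : ℕ) σ, H a n σ ∈ B.gr (i - (n : ℤ))) ∧
  (∀ σ, H 1 0 σ = 1) ∧ (∀ (n : ℕ) σ, H 1 (n + 1) σ = 0) ∧
  (∀ (i j : ℤ), ∀ a ∈ A.gr i, ∀ b ∈ A.gr j, ∀ (n : ℕ) (σ : SingN unitInterval n),
    H (a * b) n σ =
      ∑ p : Fin (n + 1),
        (((-1 : ℤˣ) ^ (((p : ℕ) : ℤ) * (j - ((n : ℤ) - ((p : ℕ) : ℤ)))) : ℤˣ) : ℤ) •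
          (H a (p : ℕ) (ContinuousMap.comp σ (frontMap (p : ℕ) n (Nat.le_of_lt_succ p.isLt))) *
            H b (n - (p : ℕ)) (ContinuousMap.comp σ (backMap (n - (p : ℕ)) n (by omega))))) ∧
  (∀ (i : ℤ), ∀ a ∈ A.gr i,
    (∀ σ : SingN unitInterval 0, H (A.d a) 0 σ = B.d (H a 0 σ)) ∧
    (∀ (n : ℕ) (σ : SingN unitInterval (n + 1)),
      H (A.d a) (n + 1) σ =
        B.d (H a (n + 1) σ) +
          (((-1 : ℤˣ) ^ (i - (n : ℤ)) : ℤˣ) : ℤ) •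
            ∑ i' : Fin (n + 2), (((-1 : ℤˣ) ^ (i' : ℕ) : ℤˣ) : ℤ) •
              H a n (ContinuousMap.comp σ (faceMap i')))) ∧
  (∀ a, H a 0 const0 = f a ∧ H a 0 const1 = g a)

/-- Two dg algebra morphisms are strongly homotopic if they are related by the
equivalence relation generated by elementary strong homotopies. -/
def StronglyHomotopicHoms {k : Type} [CommRing k] (A B : DGA k) :
    DGAHom A B → DGAHom A B → Prop :=
  Relation.EqvGen (fun f g => ∃ H, IsElemStrongHomotopy A B f.toFun g.toFun H)

/-- Two dg algebras are strongly homotopy equivalent if there are dg algebra maps in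
both directions whose composites are strongly homotopic to the identities. -/
def StronglyHomotopyEquivalent {k : Type} [CommRing k] (A B : DGA k) : Prop :=
  ∃ (f : DGAHom A B) (g : DGAHom B A),
    StronglyHomotopicHoms B B (f.comp g) (DGAHom.id' B) ∧
    StronglyHomotopicHoms A A (g.comp f) (DGAHom.id' A)


namespace StrongHomotopyAux

/-- The affine singular simplex of `[0,1]` with prescribed vertices in `{0,1}`. -/
noncomputable def S (n : ℕ) (u : Fin (n + 1) → Bool) : SingN unitInterval n where
  toFun t := ⟨∑ i, if u i then t.1 i else 0,
    ⟨Finset.sum_nonneg fun i _ => by split; exacts [t.2.1 i, le_rfl],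
     (Finset.sum_le_sum fun i _ => by split; exacts [le_rfl, t.2.1 i]).trans t.2.2.le⟩⟩
  continuous_toFun := by
    apply Continuous.subtype_mk
    refine continuous_finset_sum _ fun i _ => ?_
    split
    · exact (continuous_apply i).comp continuous_subtype_val
    · exact continuous_const

theorem S_comp {m n : ℕ} (u : Fin (n + 1) → Bool) (v : Fin (m + 1) → Fin (n + 1)) :
    ContinuousMap.comp (S n u) (vertAffine v) = S m (u ∘ v) := by
  apply ContinuousMap.ext
  intro t
  apply Subtype.ext
  change (∑ j, if u j then (∑ i ∈ Finset.univ.filter (fun i => v i = j), t.1 i) else 0)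
    = ∑ i, if u (v i) then t.1 i else 0
  rw [← Finset.sum_fiberwise_of_maps_to (fun i _ => Finset.mem_univ (v i))]
  refine Finset.sum_congr rfl fun j _ => ?_
  split
  · rename_i h
    refine Finset.sum_congr rfl fun i hi => ?_
    rw [(Finset.mem_filter.1 hi).2, if_pos h]
  · rename_i h
    symm
    refine Finset.sum_eq_zero fun i hi => ?_
    rw [(Finset.mem_filter.1 hi).2, if_neg h]

theorem S_comp' {m n : ℕ} (u : Fin (n + 1) → Bool) (v : Fin (m + 1) → Fin (n + 1))
    (w : Fin (m + 1) → Bool) (h : ∀ i, u (v i) = w i) :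
    ContinuousMap.comp (S n u) (vertAffine v) = S m w := by
  rw [S_comp]; congr 1; exact funext h

theorem S_const0 : S 0 ![false] = const0 := by
  apply ContinuousMap.ext
  intro t
  apply Subtype.ext
  change (∑ j : Fin 1, if ![false] j then t.1 j else 0) = 0
  simp

theorem S_const1 : S 0 ![true] = const1 := by
  apply ContinuousMap.ext
  intro t
  apply Subtype.ext
  change (∑ j : Fin 1, if ![true] j then t.1 j else 0) = 1
  have := t.2.2
  simpa using this

variable {k : Type} [CommRing k] {A B : DGA k}

theorem map_MC (f : DGAHom A B) {x : A.A} (hx : A.IsMC x) : B.IsMC (f.toFun x) := by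
  refine ⟨f.map_gr _ _ hx.1, ?_⟩
  rw [← f.map_d, ← map_mul, ← map_add, hx.2, map_zero]

theorem map_coh (f : DGAHom A B) {x a : A.A} (h : A.CohomologousToOne x a) :
    B.CohomologousToOne (f.toFun x) (f.toFun a) := by
  obtain ⟨s, hs, e⟩ := h
  refine ⟨f.toFun s, f.map_gr _ _ hs, ?_⟩
  rw [← f.map_d, ← map_one f.toFun, ← map_sub, e]
  simp

theorem map_HGE (f : DGAHom A B) {x y : A.A} (h : A.HomotopyGaugeEquiv x y) :
    B.HomotopyGaugeEquiv (f.toFun x) (f.toFun y) := by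
  obtain ⟨g, hg, h, hh, e1, e2, c1, c2⟩ := h
  refine ⟨f.toFun g, f.map_gr _ _ hg, f.toFun h, f.map_gr _ _ hh, ?_, ?_, ?_, ?_⟩
  · rw [← f.map_d, ← map_mul, ← map_mul, ← map_add, ← map_sub, e1, map_zero]
  · rw [← f.map_d, ← map_mul, ← map_mul, ← map_add, ← map_sub, e2, map_zero]
  · rw [← map_mul]; exact map_coh f c1
  · rw [← map_mul]; exact map_coh f c2

/-- The map on homotopy moduli sets induced by a dg algebra map. -/
def induced (f : DGAHom A B) : A.MChmod → B.MChmod :=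
  Quot.map (fun x : A.MCEl => (⟨f.toFun x.1, map_MC f x.2⟩ : B.MCEl))
    (fun _ _ h => map_HGE f h)

theorem d_one (B : DGA k) : B.d 1 = 0 := by
  have h := B.leibniz 0 1 (SetLike.GradedOne.one_mem) 1
  simpa using h

theorem edge {f g : A.A → B.A} {H} (hH : IsElemStrongHomotopy A B f g H)
    {x : A.A} (hx : A.IsMC x) (a b : Bool) :
    B.d (1 + H x 1 (S 1 ![a, b])) + H x 0 (S 0 ![a]) * (1 + H x 1 (S 1 ![a, b]))
      - (1 + H x 1 (S 1 ![a, b])) * H x 0 (S 0 ![b]) = 0 := by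
  obtain ⟨hadd, hsmul, hdeg, hgr, h1, h1', hmul, hd, hend⟩ := hH
  have hz : ∀ n σ, H 0 n σ = 0 := fun n σ => by simpa using hsmul 0 0 n σ
  have e := hadd (A.d x) (x * x) 1 (S 1 ![a, b])
  rw [hx.2, hz, hmul 1 1 x hx.1 x hx.1, (hd 1 x hx.1).2 0] at e
  rw [Fin.sum_univ_two, Fin.sum_univ_two] at e
  have f0 : ContinuousMap.comp (S 1 ![a, b]) (faceMap 0) = S 0 ![b] :=
    S_comp' _ _ _ (by intro i; fin_cases i; rfl)
  have f1 : ContinuousMap.comp (S 1 ![a, b]) (faceMap 1) = S 0 ![a] :=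
    S_comp' _ _ _ (by intro i; fin_cases i; rfl)
  have p0 : ContinuousMap.comp (S 1 ![a, b]) (frontMap 0 1 (by omega)) = S 0 ![a] :=
    S_comp' _ _ _ (by intro i; fin_cases i; rfl)
  have p1 : ContinuousMap.comp (S 1 ![a, b]) (frontMap 1 1 (by omega)) = S 1 ![a, b] :=
    S_comp' _ _ _ (by intro i; fin_cases i <;> rfl)
  have q0 : ContinuousMap.comp (S 1 ![a, b]) (backMap 0 1 (by omega)) = S 0 ![b] :=
    S_comp' _ _ _ (by intro i; fin_cases i; rfl)
  have q1 : ContinuousMap.comp (S 1 ![a, b]) (backMap 1 1 (by omega)) = S 1 ![a, b] :=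
    S_comp' _ _ _ (by intro i; fin_cases i <;> rfl)
  rw [f0, f1] at e
  replace e := e.trans (congrArg₂ (· + ·) rfl (congrArg₂ (· + ·)
    (congrArg₂ (· • ·) rfl (congrArg₂ (· * ·) (congrArg (H x 0) p0) (congrArg (H x 1) q1)))
    (congrArg₂ (· • ·) rfl (congrArg₂ (· * ·) (congrArg (H x 1) p1) (congrArg (H x 0) q0)))))
  simp at e
  rw [map_add, d_one, mul_add, add_mul, mul_one, one_mul, zero_add]
  rw [e]
  abel

theorem triangle {f g : A.A → B.A} {H} (hH : IsElemStrongHomotopy A B f g H)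
    {x : A.A} (hx : A.IsMC x) (a b : Bool) :
    B.CohomologousToOne (H x 0 (S 0 ![a]))
      ((1 + H x 1 (S 1 ![a, b])) * (1 + H x 1 (S 1 ![b, a]))) := by
  obtain ⟨hadd, hsmul, hdeg, hgr, h1, h1', hmul, hd, hend⟩ := hH
  have hz : ∀ n σ, H 0 n σ = 0 := fun n σ => by simpa using hsmul 0 0 n σ
  have e := hadd (A.d x) (x * x) 2 (S 2 ![a, b, a])
  rw [hx.2, hz, hmul 1 1 x hx.1 x hx.1, (hd 1 x hx.1).2 1] at e
  rw [Fin.sum_univ_three, Fin.sum_univ_three] at e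
  have f0 : ContinuousMap.comp (S 2 ![a, b, a]) (faceMap 0) = S 1 ![b, a] :=
    S_comp' _ _ _ (by intro i; fin_cases i <;> rfl)
  have f1 : ContinuousMap.comp (S 2 ![a, b, a]) (faceMap 1) = S 1 ![a, a] :=
    S_comp' _ _ _ (by intro i; fin_cases i <;> rfl)
  have f2 : ContinuousMap.comp (S 2 ![a, b, a]) (faceMap 2) = S 1 ![a, b] :=
    S_comp' _ _ _ (by intro i; fin_cases i <;> rfl)
  have p0 : ContinuousMap.comp (S 2 ![a, b, a]) (frontMap 0 2 (by omega)) = S 0 ![a] :=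
    S_comp' _ _ _ (by intro i; fin_cases i; rfl)
  have p1 : ContinuousMap.comp (S 2 ![a, b, a]) (frontMap 1 2 (by omega)) = S 1 ![a, b] :=
    S_comp' _ _ _ (by intro i; fin_cases i <;> rfl)
  have p2 : ContinuousMap.comp (S 2 ![a, b, a]) (frontMap 2 2 (by omega)) = S 2 ![a, b, a] :=
    S_comp' _ _ _ (by intro i; fin_cases i <;> rfl)
  have q0 : ContinuousMap.comp (S 2 ![a, b, a]) (backMap 0 2 (by omega)) = S 0 ![a] :=
    S_comp' _ _ _ (by intro i; fin_cases i; rfl)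
  have q1 : ContinuousMap.comp (S 2 ![a, b, a]) (backMap 1 2 (by omega)) = S 1 ![b, a] :=
    S_comp' _ _ _ (by intro i; fin_cases i <;> rfl)
  have q2 : ContinuousMap.comp (S 2 ![a, b, a]) (backMap 2 2 (by omega)) = S 2 ![a, b, a] :=
    S_comp' _ _ _ (by intro i; fin_cases i <;> rfl)
  have dg : H x 1 (S 1 ![a, a]) = 0 := by
    have : ContinuousMap.comp (S 0 ![a]) (degenMap 0) = S 1 ![a, a] :=
      S_comp' _ _ _ (by intro i; fin_cases i <;> rfl)
    rw [← this]
    exact hdeg x 0 0 _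
  rw [f0, f1, f2] at e
  replace e := e.trans (congrArg₂ (· + ·) rfl (congrArg₂ (· + ·) (congrArg₂ (· + ·)
    (congrArg₂ (· • ·) rfl (congrArg₂ (· * ·) (congrArg (H x 0) p0) (congrArg (H x 2) q2)))
    (congrArg₂ (· • ·) rfl (congrArg₂ (· * ·) (congrArg (H x 1) p1) (congrArg (H x 1) q1))))
    (congrArg₂ (· • ·) rfl (congrArg₂ (· * ·) (congrArg (H x 2) p2) (congrArg (H x 0) q0)))))
  simp [dg] at e
  refine ⟨-H x 2 (S 2 ![a, b, a]), ?_, ?_⟩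
  · have := hgr 1 x hx.1 2 (S 2 ![a, b, a])
    exact neg_mem (by simpa using this)
  · rw [map_neg, ← sub_eq_zero, mul_neg, neg_mul]
    refine Eq.trans ?_ e.symm
    noncomm_ring

theorem elem_HGE {f g : A.A → B.A} {H} (hH : IsElemStrongHomotopy A B f g H)
    {x : A.A} (hx : A.IsMC x) : B.HomotopyGaugeEquiv (f x) (g x) := by
  have hf : H x 0 (S 0 ![false]) = f x := by rw [S_const0]; exact (hH.2.2.2.2.2.2.2.2 x).1
  have hg : H x 0 (S 0 ![true]) = g x := by rw [S_const1]; exact (hH.2.2.2.2.2.2.2.2 x).2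
  have hm : ∀ σ, 1 + H x 1 σ ∈ B.gr 0 := fun σ =>
    add_mem SetLike.GradedOne.one_mem (by simpa using hH.2.2.2.1 1 x hx.1 1 σ)
  rw [← hf, ← hg]
  exact ⟨_, hm (S 1 ![true, false]), _, hm (S 1 ![false, true]),
    edge hH hx _ _, edge hH hx _ _, triangle hH hx _ _, triangle hH hx _ _⟩

theorem induced_eq {f g : DGAHom A B} (h : StronglyHomotopicHoms A B f g) :
    induced f = induced g := by
  induction h with
  | rel f g h =>
    obtain ⟨H, hH⟩ := h
    funext x
    induction x using Quot.ind with
    | mk x => exact Quot.sound (elem_HGE hH x.2)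
  | refl => rfl
  | symm _ _ _ ih => exact ih.symm
  | trans _ _ _ _ _ ih1 ih2 => exact ih1.trans ih2

end StrongHomotopyAux

/-- **Theorem.** A strong homotopy equivalence between two dg algebras `A` and `B` over
a commutative ring `k` induces a bijection `MChmod(A) ≅ MChmod(B)` between their
Maurer-Cartan homotopy moduli sets (induced by the map `f : A → B` of the
equivalence). -/
theorem strong_homotopy_equivalence_induces_MChmod_bijection
    {k : Type} [CommRing k] (A B : DGA k)
    (f : DGAHom A B) (g : DGAHom B A)
    (hfg : StronglyHomotopicHoms B B (f.comp g) (DGAHom.id' B))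
    (hgf : StronglyHomotopicHoms A A (g.comp f) (DGAHom.id' A)) :
    ∃ e : A.MChmod ≃ B.MChmod, ∀ (x : A.MCEl) (hy : B.IsMC (f.toFun x.1)),
      e (Quot.mk _ x) = Quot.mk _ (⟨f.toFun x.1, hy⟩ : B.MCEl) := by
  exact ⟨{
    toFun := StrongHomotopyAux.induced f
    invFun := StrongHomotopyAux.induced g
    left_inv := fun x => by
      have h := congrFun (StrongHomotopyAux.induced_eq hgf) x
      induction x using Quot.ind with
      | mk x => exact h
    right_inv := fun x => by
      have h := congrFun (StrongHomotopyAux.induced_eq hfg) x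
      induction x using Quot.ind with
      | mk x => exact h }, fun _ _ => rfl⟩
end

section
/- Let X be a connected Kan simplicial set. Then the pseudo-compact dg algebra C*(X) of normalized cochains on X is strongly homotopy equivalent to a connected pseudo-compact dg algebra (one whose degree-0 part is k). -/
open DirectSum

/-! ## The normalized cochain algebra of a simplicial set -/

open CategoryTheory Simplicial

/-- The morphism `[p] ⟶ [n]` of the simplex category selecting the front `p`-face. -/
def frontHom (p n : ℕ) (h : p ≤ n) : SimplexCategory.mk p ⟶ SimplexCategory.mk n :=
  SimplexCategory.mkHom ⟨fun j => Fin.castLE (by omega) j,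
    fun _ _ hab => hab⟩

/-- The morphism `[q] ⟶ [n]` of the simplex category selecting the back `q`-face. -/
def backHom (q n : ℕ) (h : q ≤ n) : SimplexCategory.mk q ⟶ SimplexCategory.mk n :=
  SimplexCategory.mkHom ⟨fun j => (⟨n - q + (j : ℕ), by have := j.isLt; omega⟩ : Fin (n + 1)),
    fun a b hab => by simp only [Fin.le_def] at hab ⊢; omega⟩

/-- `E` presents the dg algebra `CX` as the normalized cochain algebra `C*(X)` of the
simplicial set `X` over `k` (with the Alexander-Whitney cup product): via the component
maps `E`, homogeneous degree-`n` elements of `CX` correspond exactly to normalized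
`k`-valued `n`-cochains on `X`, compatibly with the unit, the cup product, and the
simplicial coboundary. -/
def IsCochainPresentation {k : Type} [CommRing k] (X : SSet) (CX : DGA k)
    (E : CX.A → ∀ n : ℕ, X.obj (Opposite.op (SimplexCategory.mk n)) → k) : Prop :=
  (∀ a b (n : ℕ) σ, E (a + b) n σ = E a n σ + E b n σ) ∧
  (∀ (c : k) a (n : ℕ) σ, E (c • a) n σ = c • E a n σ) ∧
  (∀ a (n : ℕ) (i : Fin (n + 1)) (τ : X.obj (Opposite.op (SimplexCategory.mk n))),
    E a (n + 1) (X.map (SimplexCategory.σ i).op τ) = 0) ∧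
  (∀ (i : ℤ), i < 0 → CX.gr i = ⊥) ∧
  (∀ (m : ℤ), ∀ a ∈ CX.gr m, ∀ (n : ℕ) σ, (n : ℤ) ≠ m → E a n σ = 0) ∧
  (∀ (m : ℤ), ∀ a ∈ CX.gr m, (∀ (n : ℕ) σ, E a n σ = 0) → a = 0) ∧
  (∀ c : X.obj (Opposite.op (SimplexCategory.mk 0)) → k,
    ∃ a ∈ CX.gr (0 : ℤ), ∀ σ, E a 0 σ = c σ) ∧
  (∀ (n : ℕ) (c : X.obj (Opposite.op (SimplexCategory.mk (n + 1))) → k),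
    (∀ (i : Fin (n + 1)) (τ : X.obj (Opposite.op (SimplexCategory.mk n))),
      c (X.map (SimplexCategory.σ i).op τ) = 0) →
    ∃ a ∈ CX.gr ((n : ℤ) + 1), ∀ σ, E a (n + 1) σ = c σ) ∧
  (∀ σ, E 1 0 σ = 1) ∧ (∀ (n : ℕ) σ, E 1 (n + 1) σ = 0) ∧
  (∀ (p q : ℕ), ∀ a ∈ CX.gr (p : ℤ), ∀ b ∈ CX.gr (q : ℤ),
    ∀ σ : X.obj (Opposite.op (SimplexCategory.mk (p + q))),
    E (a * b) (p + q) σ =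
      E a p (X.map (frontHom p (p + q) (by omega)).op σ) *
        E b q (X.map (backHom q (p + q) (by omega)).op σ)) ∧
  (∀ (n : ℕ), ∀ a ∈ CX.gr (n : ℤ),
    ∀ σ : X.obj (Opposite.op (SimplexCategory.mk (n + 1))),
    E (CX.d a) (n + 1) σ =
      ∑ i : Fin (n + 2), (((-1 : ℤˣ) ^ (i : ℕ) : ℤˣ) : ℤ) •
        E a n (X.map (SimplexCategory.δ i).op σ))

/-- The dg algebra map `C*(Y) → C*(X)` induced by a simplicial map `f : X → Y` is
characterized by `E_X (φ a) n σ = E_Y a n (f σ)`. -/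
def IsPullbackHom {k : Type} [CommRing k] {X Y : SSet} (f : X ⟶ Y)
    {CX CY : DGA k}
    (EY : CY.A → ∀ n : ℕ, Y.obj (Opposite.op (SimplexCategory.mk n)) → k)
    (EX : CX.A → ∀ n : ℕ, X.obj (Opposite.op (SimplexCategory.mk n)) → k)
    (φ : DGAHom CY CX) : Prop :=
  ∀ a (n : ℕ) σ, EX (φ.toFun a) n σ = EY a n (f.app (Opposite.op (SimplexCategory.mk n)) σ)

/-- A simplicial set is connected: it has a vertex and any two vertices are connected by
a chain of edges. -/
def SSetConnected (X : SSet) : Prop :=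
  Nonempty (X.obj (Opposite.op (SimplexCategory.mk 0))) ∧
  ∀ a b : X.obj (Opposite.op (SimplexCategory.mk 0)),
    Relation.EqvGen
      (fun a b : X.obj (Opposite.op (SimplexCategory.mk 0)) =>
        ∃ e : X.obj (Opposite.op (SimplexCategory.mk 1)),
          X.map (SimplexCategory.δ 1).op e = a ∧ X.map (SimplexCategory.δ 0).op e = b)
      a b


section HEP
universe u
open MonoidalCategory
open SSet.modelCategoryQuillen

lemma hep_aux {X Z : SSet.{u}} [SSet.KanComplex X] (S : Z.Subcomplex)
    (φ : ∀ n : SimplexCategory, Z.obj (.op n) → (n ⟶ SimplexCategory.mk 1) → X.obj (.op n))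
    (hφ : ∀ (n m : SimplexCategory) (θ : m ⟶ n) (z : Z.obj (.op n)) (t : n ⟶ SimplexCategory.mk 1),
      (z ∈ S.obj (.op n) ∨ ∀ j, t.toOrderHom j = 0) →
        φ m (Z.map θ.op z) (θ ≫ t) = X.map θ.op (φ n z t)) :
    ∃ G : ∀ n : SimplexCategory, Z.obj (.op n) → (n ⟶ SimplexCategory.mk 1) → X.obj (.op n),
      (∀ (n m : SimplexCategory) (θ : m ⟶ n) (z : Z.obj (.op n)) (t : n ⟶ SimplexCategory.mk 1),
        G m (Z.map θ.op z) (θ ≫ t) = X.map θ.op (G n z t)) ∧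
      (∀ (n : SimplexCategory) (z : Z.obj (.op n)) (t : n ⟶ SimplexCategory.mk 1),
        (z ∈ S.obj (.op n) ∨ ∀ j, t.toOrderHom j = 0) → G n z t = φ n z t) := by
  have hmem : ∀ (n : SimplexCategory) (s : (Δ[1] : SSet.{u}).obj (.op n)),
      s ∈ (SSet.horn.{u} 1 0).obj (.op n) ↔ ∀ j, (SSet.stdSimplex.objEquiv s).toOrderHom j = 0 := by
    intro n s
    rw [SSet.mem_horn_iff]
    constructor
    · intro h j
      by_contra hj
      apply h
      ext i
      simp only [Set.mem_union, Set.mem_range, Set.mem_singleton_iff, Set.mem_univ, iff_true]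
      fin_cases i
      · right; rfl
      · left; refine ⟨j, ?_⟩
        have : ∀ a : Fin 2, a ≠ 0 → a = 1 := by decide
        exact this _ hj
    · intro h h'
      have := h'.symm ▸ (Set.mem_univ (1 : Fin 2))
      rcases this with ⟨j, hj⟩ | h1
      · have := h j
        rw [show (SSet.stdSimplex.objEquiv s).toOrderHom j = 1 from hj] at this
        exact absurd this (by decide)
      · exact absurd h1 (by decide)
  let U := S.unionProd (SSet.horn.{u} 1 0)
  have hU : SSet.anodyneExtensions U.ι :=
    SSet.anodyneExtensions_unionProd_ι _ _ (SSet.anodyneExtensions.horn_ι 0)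
  let f : (U : SSet.{u}) ⟶ X :=
    { app := fun n => ↾fun z => φ n.unop z.1.1 (SSet.stdSimplex.objEquiv z.1.2)
      naturality := by
        intro n m θ
        ext ⟨⟨z, s⟩, hz⟩
        have := (SSet.Subcomplex.mem_unionProd_iff S (SSet.horn.{u} 1 0) (z, s)).1 hz
        exact hφ n.unop m.unop θ.unop z (SSet.stdSimplex.objEquiv s) (by
          rcases this with h | h
          · right; exact (hmem n.unop s).1 h
          · left; exact h) }
  have hfib : HomotopicalAlgebra.Fibration (Limits.terminal.from X) := inferInstance
  have := hU (Limits.terminal.from X) (by rwa [← HomotopicalAlgebra.fibration_iff])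
  have sq : CommSq f U.ι (Limits.terminal.from X) (Limits.terminal.from _) := ⟨by simp⟩
  have hl : U.ι ≫ sq.lift = f := sq.fac_left
  refine ⟨fun n z t => sq.lift.app (.op n) (z, SSet.stdSimplex.objEquiv.symm t), ?_, ?_⟩
  · intro n m θ z t
    exact NatTrans.naturality_apply sq.lift θ.op
      ((z, SSet.stdSimplex.objEquiv.symm t) : (Z ⊗ Δ[1] : SSet.{u}).obj (.op n))
  · intro n z t h
    have hz : ((z, SSet.stdSimplex.objEquiv.symm t) : (Z ⊗ Δ[1] : SSet.{u}).obj (.op n)) ∈ U.obj (.op n) := by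
      refine (SSet.Subcomplex.mem_unionProd_iff S (SSet.horn.{u} 1 0) _).2 ?_
      rcases h with h | h
      · right; exact h
      · left; exact (hmem n _).2 (by simpa using h)
    have h2 := congrArg (fun g => g.app (.op n) ⟨_, hz⟩) hl
    exact h2

lemma hom_to_zero_eq {n : SimplexCategory} (a b : n ⟶ SimplexCategory.mk 0) : a = b := by
  ext i : 3
  exact Subsingleton.elim (α := Fin 1) _ _

lemma hom_one_eq_of_zero {n : SimplexCategory} (t : n ⟶ SimplexCategory.mk 1)
    (h : ∀ j, t.toOrderHom j = 0) :
    t = SimplexCategory.const n (SimplexCategory.mk 0) 0 ≫ SimplexCategory.δ 1 := by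
  ext j : 3
  rw [h j]
  rfl

lemma hom_one_eq_of_one {n : SimplexCategory} (t : n ⟶ SimplexCategory.mk 1)
    (h : ∀ j, t.toOrderHom j = 1) :
    t = SimplexCategory.const n (SimplexCategory.mk 0) 0 ≫ SimplexCategory.δ 0 := by
  ext j : 3
  rw [h j]
  rfl

/-- edge relation -/
def EdgeRel (X : SSet.{u}) (a b : X.obj (.op (SimplexCategory.mk 0))) : Prop :=
  ∃ e : X.obj (.op (SimplexCategory.mk 1)),
    X.map (SimplexCategory.δ 1).op e = a ∧ X.map (SimplexCategory.δ 0).op e = b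

lemma map_map {X : SSet.{u}} {a b c : SimplexCategory} (f : a ⟶ b) (g : b ⟶ c)
    (x : X.obj (.op c)) : X.map f.op (X.map g.op x) = X.map (f ≫ g).op x := by
  simp

lemma map_idd {X : SSet.{u}} {a : SimplexCategory} (f : a ⟶ a) (hf : f = 𝟙 a)
    (x : X.obj (.op a)) : X.map f.op x = x := by
  subst hf; simp

lemma EdgeRel.rfl' {X : SSet.{u}} (a : X.obj (.op (SimplexCategory.mk 0))) : EdgeRel X a a := by
  refine ⟨X.map (SimplexCategory.σ 0).op a, ?_, ?_⟩ <;> rw [map_map] <;>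
    exact map_idd _ (hom_to_zero_eq _ _) _

open Classical in
lemma EdgeRel.eucl {X : SSet.{u}} [SSet.KanComplex X] {a b c : X.obj (.op (SimplexCategory.mk 0))}
    (hab : EdgeRel X a b) (hac : EdgeRel X a c) : EdgeRel X b c := by
  obtain ⟨e, he0, he1⟩ := hab
  obtain ⟨e', he0', he1'⟩ := hac
  let Z : SSet.{u} :=
    { obj := fun n => ULift.{u} (n.unop ⟶ SimplexCategory.mk 1)
      map := fun θ => ↾fun z => ⟨θ.unop ≫ z.down⟩
      map_id := by intros; ext; simp
      map_comp := by intros; ext; simp }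
  let S : Z.Subcomplex :=
    { obj := fun n => {z | (∀ j, z.down.toOrderHom j = 0) ∨ (∀ j, z.down.toOrderHom j = 1)}
      map := by
        intro n m θ z hz
        rcases hz with hz | hz
        · left; intro j; exact hz _
        · right; intro j; exact hz _ }
  obtain ⟨G, hG1, hG2⟩ := hep_aux (X := X) S
    (fun n z t => if (∀ j, z.down.toOrderHom j = 0) then X.map t.op e else
      if (∀ j, z.down.toOrderHom j = 1) then X.map t.op e' else
        X.map (SimplexCategory.const n (SimplexCategory.mk 0) 0).op a) (by
      intro n m θ z t h
      have key : ∀ (z' : m ⟶ SimplexCategory.mk 1), (∀ j, t.toOrderHom j = 0) →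
          (if (∀ j, z'.toOrderHom j = 0) then X.map (θ ≫ t).op e else
            if (∀ j, z'.toOrderHom j = 1) then X.map (θ ≫ t).op e' else
            X.map (SimplexCategory.const m (SimplexCategory.mk 0) 0).op a)
          = X.map (SimplexCategory.const m (SimplexCategory.mk 0) 0).op a := by
        intro z' ht
        rw [hom_one_eq_of_zero (θ ≫ t) (fun j => ht _), ← map_map, ← map_map, he0, he0']
        simp
      have key' : ∀ (z' : n ⟶ SimplexCategory.mk 1), (∀ j, t.toOrderHom j = 0) →
          (if (∀ j, z'.toOrderHom j = 0) then X.map t.op e else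
            if (∀ j, z'.toOrderHom j = 1) then X.map t.op e' else
            X.map (SimplexCategory.const n (SimplexCategory.mk 0) 0).op a)
          = X.map (SimplexCategory.const n (SimplexCategory.mk 0) 0).op a := by
        intro z' ht
        rw [hom_one_eq_of_zero t (fun j => ht _), ← map_map, ← map_map, he0, he0']
        simp
      rcases h with h | h
      · rcases h with h | h
        · have h2 : ∀ j, ((Z.map θ.op) z).down.toOrderHom j = 0 := fun j => h _
          rw [if_pos h, if_pos h2, map_map]
        · have h2 : ∀ j, ((Z.map θ.op) z).down.toOrderHom j = 1 := fun j => h _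
          have hn : ¬ ∀ j, z.down.toOrderHom j = 0 := fun h0 => by
            have := h0 0; rw [h 0] at this; exact absurd this (by decide)
          have hn2 : ¬ ∀ j, ((Z.map θ.op) z).down.toOrderHom j = 0 := fun h0 => by
            have := h0 0; rw [h2 0] at this; exact absurd this (by decide)
          rw [if_neg hn, if_neg hn2, if_pos h, if_pos h2, map_map]
      · rw [key _ h, key' _ h, map_map]
        congr 1)
  let o : SimplexCategory.mk 1 ⟶ SimplexCategory.mk 1 :=
    SimplexCategory.const _ (SimplexCategory.mk 0) 0 ≫ SimplexCategory.δ 0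
  have ho : ∀ (i : Fin 2), (SimplexCategory.δ i : SimplexCategory.mk 0 ⟶ _) ≫ o = SimplexCategory.δ 0 := by
    intro i
    rw [← Category.assoc, hom_to_zero_eq (SimplexCategory.δ i ≫ _) (𝟙 _), Category.id_comp]
  refine ⟨G _ ⟨𝟙 _⟩ o, ?_, ?_⟩
  · rw [← hG1, ho]
    have hz : ∀ j, ((Z.map (SimplexCategory.δ 1).op) ⟨𝟙 _⟩).down.toOrderHom j = 0 := by
      intro j; have : j = 0 := Subsingleton.elim (α := Fin 1) _ _
      subst this; rfl
    rw [hG2 _ _ _ (Or.inl (Or.inl hz)), if_pos hz, he1]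
  · rw [← hG1, ho]
    have hz : ∀ j, ((Z.map (SimplexCategory.δ 0).op) ⟨𝟙 _⟩).down.toOrderHom j = 1 := by
      intro j; have : j = 0 := Subsingleton.elim (α := Fin 1) _ _
      subst this; rfl
    rw [hG2 _ _ _ (Or.inl (Or.inr hz)), if_neg, if_pos hz, he1']
    intro h0; have := h0 0; rw [hz 0] at this; exact absurd this (by decide)

lemma edge_of_connected (X : SSet.{u}) [SSet.KanComplex X] (h : SSetConnected X)
    (a b : X.obj (.op (SimplexCategory.mk 0))) : EdgeRel X a b := by
  have := h.2 a b
  induction this with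
  | rel x y h => exact h
  | refl x => exact EdgeRel.rfl' x
  | symm x y _ ih => exact ih.eucl (EdgeRel.rfl' x)
  | trans x y z _ _ ih1 ih2 => exact (ih1.eucl (EdgeRel.rfl' x)).eucl ih2

/-- The family of labelled simplices. -/
def labSSet (X : SSet.{u}) : SSet.{u} where
  obj n := X.obj n × (Fin (n.unop.len + 1) → Bool)
  map θ := ↾fun z => (X.map θ z.1, z.2 ∘ θ.unop.toOrderHom)
  map_id := by intros; ext z; simp; rfl
  map_comp := by intros; ext z; simp; rfl

open Classical in
lemma exists_theta (X : SSet.{u}) [SSet.KanComplex X] (v : X.obj (.op (SimplexCategory.mk 0)))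
    (h : ∀ x, EdgeRel X x v) :
    ∃ Θ : ∀ n : SimplexCategory, X.obj (.op n) → (Fin (n.len + 1) → Bool) → X.obj (.op n),
      (∀ (n m : SimplexCategory) (θ : m ⟶ n) (x : X.obj (.op n)) (ε : Fin (n.len + 1) → Bool),
        Θ m (X.map θ.op x) (ε ∘ θ.toOrderHom) = X.map θ.op (Θ n x ε)) ∧
      (∀ n x, Θ n x (fun _ => false) = x) ∧
      (∀ x, Θ (SimplexCategory.mk 0) x (fun _ => true) = v) := by
  choose e he0 he1 using h
  let c := fun n : SimplexCategory => SimplexCategory.const n (SimplexCategory.mk 0) 0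
  let d := fun n : SimplexCategory => SimplexCategory.const (SimplexCategory.mk 0) n 0
  have hc : ∀ {m n : SimplexCategory} (θ : m ⟶ n), θ ≫ c n = c m := fun θ => hom_to_zero_eq _ _
  -- constancy
  let K : ∀ n : SimplexCategory, X.obj (.op n) → Prop := fun n x =>
    x = X.map (c n).op (X.map (d n).op x)
  have hK : ∀ {m n : SimplexCategory} (θ : m ⟶ n) (x), K n x → K m (X.map θ.op x) ∧
      X.map (d m).op (X.map θ.op x) = X.map (d n).op x := by
    intro m n θ x hx
    have h1 : X.map (d m).op (X.map θ.op x) = X.map (d n).op x := by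
      rw [hx]
      simp only [map_map]
      congr 3
    refine ⟨?_, h1⟩
    show _ = _
    rw [h1]
    conv_lhs => rw [hx]
    rw [map_map, hc]
  let S : (labSSet X).Subcomplex :=
    { obj := fun n => {z | (∀ j, z.2 j = false) ∨ ((∀ j, z.2 j = true) ∧ K n.unop z.1)}
      map := by
        intro n m θ z hz
        rcases hz with hz | hz
        · left; intro j; exact hz _
        · right; exact ⟨fun j => hz.1 _, (hK θ.unop _ hz.2).1⟩ }
  obtain ⟨G, hG1, hG2⟩ := hep_aux (X := X) S
    (fun n z t => if (∀ j, z.2 j = true) ∧ K n z.1 then X.map t.op (e (X.map (d n).op z.1))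
      else z.1) (by
      intro n m θ z t h
      by_cases h1 : (∀ j, z.2 j = true) ∧ K n z.1
      · have h2 : (∀ j, ((labSSet X).map θ.op z).2 j = true) ∧ K m ((labSSet X).map θ.op z).1 :=
          ⟨fun j => h1.1 _, (hK θ _ h1.2).1⟩
        rw [if_pos h1, if_pos h2, map_map]
        have := (hK θ _ h1.2).2
        exact congrArg (fun q => X.map (θ ≫ t).op (e q)) this
      · rw [if_neg h1]
        split_ifs with h2
        · rcases h with h | h
          · rcases h with h | h
            · have := h2.1 0
              exact absurd ((h _).symm.trans this) (by decide)
            · exact absurd h h1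
          · rw [hom_one_eq_of_zero (θ ≫ t) (fun j => h _), ← map_map, he0]
            exact h2.2.symm
        · rfl)
  let o : ∀ n, n ⟶ SimplexCategory.mk 1 := fun n => c n ≫ SimplexCategory.δ 0
  refine ⟨fun n x ε => G n (x, ε) (o n), ?_, ?_, ?_⟩
  · intro n m θ x ε
    have := hG1 n m θ (x, ε) (o n)
    rw [← this]
    show _ = G m _ (θ ≫ c n ≫ SimplexCategory.δ 0)
    rw [← Category.assoc, hc]
    rfl
  · intro n x
    refine (hG2 n (x, fun _ => false) (o n) (Or.inl (Or.inl fun j => rfl))).trans (if_neg ?_)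
    intro h
    exact absurd (h.1 0) (by simp)
  · intro x
    have hx : K (SimplexCategory.mk 0) x := by
      show _ = _
      rw [map_map]
      exact (map_idd _ (hom_to_zero_eq _ _) _).symm
    refine (hG2 _ (x, fun _ => true) (o _) (Or.inl (Or.inr ⟨fun j => rfl, hx⟩))).trans
      ((if_pos ⟨fun j => rfl, hx⟩).trans ?_)
    show X.map (c _ ≫ SimplexCategory.δ 0).op _ = _
    rw [← map_map, he1]
    exact map_idd _ (hom_to_zero_eq _ _) _
end HEP

section Shuffle

/-- prepend -/
def cs {P : Type*} (q : P) (f : ℕ → P) (t : ℕ) : P :=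
  match t with
  | 0 => by exact q
  | t + 1 => by exact f t

/-- skip `l` -/
def sk (l i : ℕ) : ℕ := if i < l then i else i + 1

variable {k : Type} [CommRing k]

/-- signed sum over lattice paths -/
def Sh {P : Type*} (m n : ℕ) (p : ℕ → ℕ → P) (T : (ℕ → P) → k) : k :=
  match m, n with
  | 0, 0 => by exact T (fun _ => p 0 0)
  | m + 1, 0 => by exact Sh m 0 (fun i j => p (i + 1) j) (fun f => T (cs (p 0 0) f))
  | 0, n + 1 => by exact Sh 0 n (fun i j => p i (j + 1)) (fun f => T (cs (p 0 0) f))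
  | m + 1, n + 1 => by exact Sh m (n + 1) (fun i j => p (i + 1) j) (fun f => T (cs (p 0 0) f))
      + (-1) ^ (m + 1) * Sh (m + 1) n (fun i j => p i (j + 1)) (fun f => T (cs (p 0 0) f))
termination_by m + n

def ShX {P : Type*} (m n : ℕ) (p : ℕ → ℕ → P) (T : (ℕ → P) → k) : k :=
  match m, n with
  | 0, _ => by exact 0
  | m + 1, n => by exact Sh m n (fun i j => p (i + 1) j) T

def ShI {P : Type*} (m n : ℕ) (p : ℕ → ℕ → P) (T : (ℕ → P) → k) : k :=
  match m, n with
  | _, 0 => by exact 0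
  | m, n + 1 => by exact (-1) ^ m * Sh m n (fun i j => p i (j + 1)) T

lemma Sh_step {P : Type*} (m n : ℕ) (h : 1 ≤ m + n) (p : ℕ → ℕ → P) (T : (ℕ → P) → k) :
    Sh m n p T = ShX m n p (fun f => T (cs (p 0 0) f)) + ShI m n p (fun f => T (cs (p 0 0) f)) := by
  match m, n with
  | 0, 0 => omega
  | m + 1, 0 => rw [Sh]; simp [ShX, ShI]
  | 0, n + 1 => rw [Sh]; simp [ShX, ShI]
  | m + 1, n + 1 => rw [Sh]; simp [ShX, ShI]

structure IsPath (m n : ℕ) (f g : ℕ → ℕ) : Prop where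
  f0 : f 0 = 0
  g0 : g 0 = 0
  step : ∀ t < m + n, (f (t + 1) = f t + 1 ∧ g (t + 1) = g t) ∨ (f (t + 1) = f t ∧ g (t + 1) = g t + 1)
  fN : f (m + n) = m
  gN : g (m + n) = n

lemma IsPath.consX {m n f g} (h : IsPath m n f g) :
    IsPath (m + 1) n (cs 0 (fun t => f t + 1)) (cs 0 g) := by
  refine ⟨rfl, rfl, ?_, ?_, ?_⟩
  · intro t ht
    cases t with
    | zero => left; simp [cs, h.f0, h.g0]
    | succ t =>
      have := h.step t (by omega)
      simp only [cs]; omega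
  · rw [show m + 1 + n = m + n + 1 by omega]; simp [cs, h.fN]
  · rw [show m + 1 + n = m + n + 1 by omega]; simp [cs, h.gN]

lemma IsPath.consI {m n f g} (h : IsPath m n f g) :
    IsPath m (n + 1) (cs 0 f) (cs 0 (fun t => g t + 1)) := by
  refine ⟨rfl, rfl, ?_, ?_, ?_⟩
  · intro t ht
    cases t with
    | zero => right; simp [cs, h.f0, h.g0]
    | succ t =>
      have := h.step t (by omega)
      simp only [cs]; omega
  · rw [show m + (n + 1) = m + n + 1 by omega]; simp [cs, h.fN]
  · rw [show m + (n + 1) = m + n + 1 by omega]; simp [cs, h.gN]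

lemma cs_comp {P : Type*} (p : ℕ → ℕ → P) (f g : ℕ → ℕ) :
    (fun t => p (cs 0 f t) (cs 0 g t)) = cs (p 0 0) (fun t => p (f t) (g t)) := by
  funext t; cases t <;> rfl

lemma Sh_congr {P P' : Type*} (N : ℕ) : ∀ (m n : ℕ) (_ : m + n = N) (p : ℕ → ℕ → P) (p' : ℕ → ℕ → P')
    (T : (ℕ → P) → k) (T' : (ℕ → P') → k),
    (∀ f g, IsPath m n f g → T (fun t => p (f t) (g t)) = T' (fun t => p' (f t) (g t))) →
    Sh m n p T = Sh m n p' T' := by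
  induction N with
  | zero =>
    intro m n h p p' T T' H
    obtain ⟨rfl, rfl⟩ : m = 0 ∧ n = 0 := by omega
    rw [Sh, Sh]
    exact H (fun _ => 0) (fun _ => 0) ⟨rfl, rfl, by omega, rfl, rfl⟩
  | succ N ih =>
    intro m n h p p' T T' H
    rw [Sh_step m n (by omega), Sh_step m n (by omega)]
    congr 1
    · cases m with
      | zero => rfl
      | succ m =>
        simp only [ShX]
        apply ih _ _ (by omega)
        intro f g hp
        have := H _ _ hp.consX
        rwa [cs_comp, cs_comp] at this
    · cases n with
      | zero => rfl
      | succ n =>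
        simp only [ShI]
        congr 1
        apply ih _ _ (by omega)
        intro f g hp
        have := H _ _ hp.consI
        rwa [cs_comp, cs_comp] at this

lemma Sh_lin {P : Type*} (N : ℕ) : ∀ (m n : ℕ) (_ : m + n = N) (p : ℕ → ℕ → P)
    (c : k) (T T' : (ℕ → P) → k),
    Sh m n p (fun f => c * T f + T' f) = c * Sh m n p T + Sh m n p T' := by
  induction N with
  | zero =>
    intro m n h p c T T'
    obtain ⟨rfl, rfl⟩ : m = 0 ∧ n = 0 := by omega
    rw [Sh, Sh, Sh]
  | succ N ih =>
    intro m n h p c T T'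
    rw [Sh_step m n (by omega), Sh_step m n (by omega), Sh_step m n (by omega)]
    have h1 : ∀ T T' : (ℕ → P) → k, ShX m n p (fun f => c * T f + T' f) = c * ShX m n p T + ShX m n p T' := by
      intro T T'
      cases m with
      | zero => simp [ShX]
      | succ m => simp only [ShX]; exact ih _ _ (by omega) _ _ _ _
    have h2 : ∀ T T' : (ℕ → P) → k, ShI m n p (fun f => c * T f + T' f) = c * ShI m n p T + ShI m n p T' := by
      intro T T'
      cases n with
      | zero => simp [ShI]
      | succ m => simp only [ShI]; rw [ih _ _ (by omega)]; ring
    rw [h1, h2]; ring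

lemma Sh_zero {P : Type*} (m n : ℕ) (p : ℕ → ℕ → P) : Sh m n p (fun _ => (0 : k)) = 0 := by
  have := Sh_lin (k := k) (m + n) m n rfl p (-1) (fun _ => 0) (fun _ => 0)
  simpa using this

lemma Sh_mul {P : Type*} (m n : ℕ) (p : ℕ → ℕ → P) (c : k) (T : (ℕ → P) → k) :
    Sh m n p (fun f => c * T f) = c * Sh m n p T := by
  have := Sh_lin (m + n) m n rfl p c T (fun _ => 0)
  rw [Sh_zero] at this; simpa using this

lemma Sh_add {P : Type*} (m n : ℕ) (p : ℕ → ℕ → P) (T T' : (ℕ → P) → k) :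
    Sh m n p (fun f => T f + T' f) = Sh m n p T + Sh m n p T' := by
  have := Sh_lin (m + n) m n rfl p 1 T T'
  simpa using this

lemma Sh_sub {P : Type*} (m n : ℕ) (p : ℕ → ℕ → P) (T T' : (ℕ → P) → k) :
    Sh m n p (fun f => T f - T' f) = Sh m n p T - Sh m n p T' := by
  have := Sh_lin (m + n) m n rfl p (-1) T' T
  simp only [neg_one_mul, neg_add_eq_sub] at this
  exact this

lemma Sh_eq_zero {P : Type*} (m n : ℕ) (p : ℕ → ℕ → P) (T : (ℕ → P) → k)
    (h : ∀ f g, IsPath m n f g → T (fun t => p (f t) (g t)) = 0) : Sh m n p T = 0 := by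
  rw [← Sh_zero (k := k) m n p]
  exact Sh_congr _ m n rfl _ _ _ _ h

def Loc {P : Type*} (N : ℕ) (T : (ℕ → P) → k) : Prop := ∀ f g, (∀ t ≤ N, f t = g t) → T f = T g

lemma Loc.cs {P : Type*} {N : ℕ} {T : (ℕ → P) → k} (h : Loc (N + 1) T) (q : P) :
    Loc N (fun f => T (cs q f)) := by
  intro f g hfg
  apply h
  intro t ht
  cases t with
  | zero => rfl
  | succ t => exact hfg t (by omega)

def bT {P : Type*} (N : ℕ) (T : (ℕ → P) → k) (f : ℕ → P) : k :=
  ∑ l ∈ Finset.range (N + 1), (-1) ^ l * T (fun t => f (sk l t))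

lemma bT_cs {P : Type*} (N : ℕ) (T : (ℕ → P) → k) (q : P) (f : ℕ → P) :
    bT (N + 1) T (cs q f) = T f - bT N (fun f => T (cs q f)) f := by
  unfold bT
  rw [Finset.sum_range_succ']
  have h0 : (fun t => cs q f (sk 0 t)) = f := by
    funext t; simp [sk, cs]
  have h1 : ∀ l, (fun t => cs q f (sk (l + 1) t)) = cs q (fun t => f (sk l t)) := by
    intro l; funext t
    cases t with
    | zero => simp [sk, cs]
    | succ t =>
      simp only [sk, cs]
      by_cases h : t < l <;> simp [h, cs]
  simp only [h0, h1, pow_succ]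
  simp; ring

def FX {P : Type*} (m n : ℕ) (p : ℕ → ℕ → P) (T : (ℕ → P) → k) : k :=
  match m, n with
  | 0, _ => by exact 0
  | m + 1, n => by exact ∑ l ∈ Finset.range (m + 2), (-1) ^ l * Sh m n (fun i j => p (sk l i) j) T

def FI {P : Type*} (m n : ℕ) (p : ℕ → ℕ → P) (T : (ℕ → P) → k) : k :=
  match m, n with
  | _, 0 => by exact 0
  | m, n + 1 => by exact ∑ l ∈ Finset.range (n + 2), (-1) ^ l * Sh m n (fun i j => p i (sk l j)) T

lemma sk_succ_succ (l i : ℕ) : sk (l + 1) (i + 1) = sk l i + 1 := by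
  simp only [sk]; split_ifs <;> omega
lemma sk_zero (i : ℕ) : sk 0 i = i + 1 := by simp [sk]
lemma sk_succ_zero (l : ℕ) : sk (l + 1) 0 = 0 := by simp [sk]

lemma Sh_loc_zero {P : Type*} (m : ℕ) : ∀ (p : ℕ → ℕ → P) (T : (ℕ → P) → k) (_ : Loc m T),
    Sh m 0 p T = T (fun t => p t 0) := by
  induction m with
  | zero => intro p T h; rw [Sh]; apply h; intro t ht; obtain rfl : t = 0 := by omega
            rfl
  | succ m ih =>
    intro p T h; rw [Sh, ih _ _ (h.cs _)]
    congr 1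
    funext t; cases t <;> rfl

lemma Sh_zero_loc {P : Type*} (m : ℕ) : ∀ (p : ℕ → ℕ → P) (T : (ℕ → P) → k) (_ : Loc m T),
    Sh 0 m p T = T (fun t => p 0 t) := by
  induction m with
  | zero => intro p T h; rw [Sh]; apply h; intro t ht; obtain rfl : t = 0 := by omega
            rfl
  | succ m ih =>
    intro p T h; rw [Sh, ih _ _ (h.cs _)]
    congr 1
    funext t; cases t <;> rfl

lemma Loc.bT {P : Type*} {N : ℕ} {T : (ℕ → P) → k} (h : Loc N T) : Loc (N + 1) (bT (N + 1) T) := by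
  intro f g hfg
  unfold _root_.bT
  apply Finset.sum_congr rfl
  intro l _
  congr 1
  apply h
  intro t ht
  apply hfg
  unfold sk; split_ifs <;> omega

lemma FX_rec {P : Type*} (m n : ℕ) (p : ℕ → ℕ → P) (T : (ℕ → P) → k) :
    FX (m + 1) (n + 1) p T = Sh m (n + 1) (fun i j => p (i + 1) j) T
      - (FX m (n + 1) (fun i j => p (i + 1) j) (fun f => T (cs (p 0 0) f))
        + (-1) ^ m * ∑ l ∈ Finset.range (m + 1), (-1) ^ l *
          Sh m n (fun i j => p (sk (l + 1) i) (j + 1)) (fun f => T (cs (p 0 0) f))) := by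
  rw [FX, Finset.sum_range_succ']
  simp only [sk_zero]
  have : ∀ l, Sh m (n + 1) (fun i j => p (sk (l + 1) i) j) T =
    ShX m (n + 1) (fun i j => p (sk (l + 1) i) j) (fun f => T (cs (p 0 0) f)) +
    (-1) ^ m * Sh m n (fun i j => p (sk (l + 1) i) (j + 1)) (fun f => T (cs (p 0 0) f)) := by
    intro l
    rw [Sh_step _ _ (by omega)]
    simp only [sk_succ_zero, ShI]
  simp only [this]
  have h2 : ∑ l ∈ Finset.range (m + 1), (-1 : k) ^ l *
      ShX m (n + 1) (fun i j => p (sk (l + 1) i) j) (fun f => T (cs (p 0 0) f))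
      = FX m (n + 1) (fun i j => p (i + 1) j) (fun f => T (cs (p 0 0) f)) := by
    cases m with
    | zero => simp [ShX, FX]
    | succ m => simp only [ShX, FX, sk_succ_succ]
  rw [← h2, Finset.mul_sum, ← Finset.sum_add_distrib, pow_zero, one_mul, sub_eq_add_neg, add_comm,
    ← Finset.sum_neg_distrib]
  congr 1
  apply Finset.sum_congr rfl
  intro l _
  ring

lemma FI_rec {P : Type*} (m n : ℕ) (p : ℕ → ℕ → P) (T : (ℕ → P) → k) :
    FI (m + 1) (n + 1) p T = Sh (m + 1) n (fun i j => p i (j + 1)) T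
      - ((-1) ^ (m + 1) * FI (m + 1) n (fun i j => p i (j + 1)) (fun f => T (cs (p 0 0) f))
        + ∑ l ∈ Finset.range (n + 1), (-1) ^ l *
          Sh m n (fun i j => p (i + 1) (sk (l + 1) j)) (fun f => T (cs (p 0 0) f))) := by
  rw [FI, Finset.sum_range_succ']
  simp only [sk_zero]
  have : ∀ l, Sh (m + 1) n (fun i j => p i (sk (l + 1) j)) T =
    Sh m n (fun i j => p (i + 1) (sk (l + 1) j)) (fun f => T (cs (p 0 0) f)) +
    ShI (m + 1) n (fun i j => p i (sk (l + 1) j)) (fun f => T (cs (p 0 0) f)) := by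
    intro l
    rw [Sh_step _ _ (by omega)]
    simp only [sk_succ_zero, ShX]
  simp only [this]
  have h2 : ∑ l ∈ Finset.range (n + 1), (-1 : k) ^ l *
      ShI (m + 1) n (fun i j => p i (sk (l + 1) j)) (fun f => T (cs (p 0 0) f))
      = (-1) ^ (m + 1) * FI (m + 1) n (fun i j => p i (j + 1)) (fun f => T (cs (p 0 0) f)) := by
    cases n with
    | zero => simp [ShI, FI]
    | succ n =>
      simp only [ShI, FI, sk_succ_succ, Finset.mul_sum]
      apply Finset.sum_congr rfl
      intro l _
      ring
  rw [← h2, ← Finset.sum_add_distrib, pow_zero, one_mul, sub_eq_add_neg, add_comm,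
    ← Finset.sum_neg_distrib]
  congr 1
  apply Finset.sum_congr rfl
  intro l _
  ring

lemma Sh_bT {P : Type*} (N : ℕ) : ∀ (m n : ℕ) (_ : m + n = N + 1) (p : ℕ → ℕ → P)
    (T : (ℕ → P) → k) (_ : Loc N T),
    Sh m n p (bT (N + 1) T) = FX m n p T + (-1) ^ m * FI m n p T := by
  induction N with
  | zero =>
    intro m n h p T hT
    have : (m = 1 ∧ n = 0) ∨ (m = 0 ∧ n = 1) := by omega
    rcases this with ⟨rfl, rfl⟩ | ⟨rfl, rfl⟩
    · rw [Sh_loc_zero _ _ _ hT.bT]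
      simp only [FX, FI, mul_zero, add_zero, bT]
      apply Finset.sum_congr rfl
      intro l _
      rw [Sh_loc_zero _ _ _ hT]
    · rw [Sh_zero_loc _ _ _ hT.bT]
      simp only [FX, FI, bT, pow_zero, zero_add, one_mul]
      apply Finset.sum_congr rfl
      intro l _
      rw [Sh_zero_loc _ _ _ hT]
  | succ N ih =>
    intro m n h p T hT
    match m, n with
    | 0, 0 => omega
    | m + 1, 0 =>
      obtain rfl : m = N + 1 := by omega
      rw [Sh_loc_zero _ _ _ hT.bT]
      simp only [FX, FI, mul_zero, add_zero, bT]
      apply Finset.sum_congr rfl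
      intro l _
      rw [Sh_loc_zero _ _ _ hT]
    | 0, n + 1 =>
      obtain rfl : n = N + 1 := by omega
      rw [Sh_zero_loc _ _ _ hT.bT]
      simp only [FX, FI, bT, pow_zero, zero_add, one_mul]
      apply Finset.sum_congr rfl
      intro l _
      rw [Sh_zero_loc _ _ _ hT]
    | m + 1, n + 1 =>
      have ih1 := ih m (n + 1) (by omega) (fun i j => p (i + 1) j) _ (hT.cs (p 0 0))
      have ih2 := ih (m + 1) n (by omega) (fun i j => p i (j + 1)) _ (hT.cs (p 0 0))
      rw [Sh]
      simp only [bT_cs]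
      rw [Sh_sub, Sh_sub, ih1, ih2, FX_rec, FI_rec]
      have e1 : FX (m + 1) n (fun i j => p i (j + 1)) (fun f => T (cs (p 0 0) f)) =
          Sh m n (fun i j => p (i + 1) (j + 1)) (fun f => T (cs (p 0 0) f)) -
          ∑ l ∈ Finset.range (m + 1), (-1) ^ l *
          Sh m n (fun i j => p (sk (l + 1) i) (j + 1)) (fun f => T (cs (p 0 0) f)) := by
        rw [FX, Finset.sum_range_succ', pow_zero, one_mul, sub_eq_add_neg, add_comm,
          ← Finset.sum_neg_distrib]
        simp only [sk_zero]
        congr 1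
        apply Finset.sum_congr rfl
        intro l _
        ring
      have e2 : FI m (n + 1) (fun i j => p (i + 1) j) (fun f => T (cs (p 0 0) f)) =
          Sh m n (fun i j => p (i + 1) (j + 1)) (fun f => T (cs (p 0 0) f)) -
          ∑ l ∈ Finset.range (n + 1), (-1) ^ l *
          Sh m n (fun i j => p (i + 1) (sk (l + 1) j)) (fun f => T (cs (p 0 0) f)) := by
        rw [FI, Finset.sum_range_succ', pow_zero, one_mul, sub_eq_add_neg, add_comm,
          ← Finset.sum_neg_distrib]
        simp only [sk_zero]
        congr 1
        apply Finset.sum_congr rfl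
        intro l _
        ring
      rw [e1, e2]
      have hs : ((-1 : k) ^ m) * (-1) ^ m = 1 := by
        rw [← mul_pow]; simp
      simp only [pow_succ]
      ring

lemma Sh_split {P : Type*} (i : ℕ) : ∀ (m n : ℕ) (_ : i ≤ m + n) (p : ℕ → ℕ → P)
    (T1 T2 : (ℕ → P) → k) (_ : Loc i T1),
    Sh m n p (fun f => T1 f * T2 (fun t => f (i + t))) =
      ∑ x ∈ Finset.HasAntidiagonal.antidiagonal i, if x.1 ≤ m ∧ x.2 ≤ n then
        (-1) ^ (x.2 * (m - x.1)) * (Sh x.1 x.2 p T1 *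
          Sh (m - x.1) (n - x.2) (fun i' j' => p (x.1 + i') (x.2 + j')) T2) else 0 := by
  induction i with
  | zero =>
    intro m n h p T1 T2 hT
    simp only [Finset.Nat.antidiagonal_zero, Finset.sum_singleton, zero_le, and_self, if_true, zero_mul,
      pow_zero, one_mul, Nat.sub_zero, zero_add]
    rw [← Sh_mul]
    apply Sh_congr _ _ _ rfl
    intro f g hp
    congr 1
    rw [Sh]
    apply hT
    intro t ht
    obtain rfl : t = 0 := by omega
    rw [hp.f0, hp.g0]
  | succ i ih =>
    intro m n h p T1 T2 hT
    rw [Sh_step m n (by omega)]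
    have hcs : ∀ f : ℕ → P, (fun t => cs (p 0 0) f (i + 1 + t)) = fun t => f (i + t) := by
      intro f; funext t; rw [show i + 1 + t = i + t + 1 by omega]; rfl
    simp only [hcs]
    have hR : ∀ x ∈ Finset.HasAntidiagonal.antidiagonal (i + 1), (if x.1 ≤ m ∧ x.2 ≤ n then
        (-1) ^ (x.2 * (m - x.1)) * (Sh x.1 x.2 p T1 *
          Sh (m - x.1) (n - x.2) (fun i' j' => p (x.1 + i') (x.2 + j')) T2) else 0) =
        (if x.1 ≤ m ∧ x.2 ≤ n then
        (-1) ^ (x.2 * (m - x.1)) * (ShX x.1 x.2 p (fun f => T1 (cs (p 0 0) f)) *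
          Sh (m - x.1) (n - x.2) (fun i' j' => p (x.1 + i') (x.2 + j')) T2) else 0) +
        (if x.1 ≤ m ∧ x.2 ≤ n then
        (-1) ^ (x.2 * (m - x.1)) * (ShI x.1 x.2 p (fun f => T1 (cs (p 0 0) f)) *
          Sh (m - x.1) (n - x.2) (fun i' j' => p (x.1 + i') (x.2 + j')) T2) else 0) := by
      intro x hx
      have := Finset.HasAntidiagonal.mem_antidiagonal.1 hx
      rw [Sh_step x.1 x.2 (by omega)]
      split_ifs
      · ring
      · simp
    rw [Finset.sum_congr rfl hR, Finset.sum_add_distrib]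
    congr 1
    · rw [Finset.Nat.sum_antidiagonal_succ]
      simp only [ShX, zero_mul, mul_zero, ite_self, zero_add]
      cases m with
      | zero => simp [ShX]
      | succ m =>
        simp only [ShX]
        rw [ih m n (by omega) _ _ _ (hT.cs _)]
        apply Finset.sum_congr rfl
        intro x _
        simp only [Nat.add_le_add_iff_right, Nat.add_sub_add_right]
        congr 5
        funext i' j'; congr 1; omega
    · rw [Finset.Nat.sum_antidiagonal_succ']
      simp only [ShI, zero_mul, mul_zero, ite_self, zero_add]
      cases n with
      | zero => simp [ShI]
      | succ n =>
        simp only [ShI]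
        rw [ih m n (by omega) _ _ _ (hT.cs _), Finset.mul_sum]
        apply Finset.sum_congr rfl
        intro x _
        simp only [Nat.add_le_add_iff_right, Nat.add_sub_add_right]
        have hf : (fun i' j' => p (x.1 + i') (x.2 + j' + 1)) =
            (fun i' j' => p (x.1 + i') (x.2 + 1 + j')) := by
          funext i' j'; congr 1; omega
        rw [hf]
        split_ifs with hx
        · obtain ⟨w, rfl⟩ := Nat.exists_eq_add_of_le hx.1
          rw [Nat.add_sub_cancel_left, add_mul, pow_add, pow_add]
          ring
        · simp
end Shuffle

section Quot
variable {k : Type} [CommRing k]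

lemma exists_quot_aux (A : DGA k) (Q : Type) [Ring Q] [Algebra k Q] (q : A.A →ₐ[k] Q)
    (hq : Function.Surjective q)
    (hI : ∀ a, q a = 0 → ∀ i, q ((DirectSum.decompose A.gr a i : A.gr i) : A.A) = 0)
    (hd : ∀ a, q a = 0 → q (A.d a) = 0) :
    ∃ (B : DGA k) (π : DGAHom A B), Function.Surjective π.toFun ∧ (∀ a, π.toFun a = 0 ↔ q a = 0) ∧
      (∀ i, ∀ b ∈ B.gr i, ∃ a ∈ A.gr i, π.toFun a = b) := by
  -- descent of linear maps
  have desc : ∀ {M : Type} [AddCommMonoid M] [Module k M] (φ : A.A →ₗ[k] M)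
      (_ : ∀ a, q a = 0 → φ a = 0), ∃ ψ : (Q) →ₗ[k] M, ∀ a, ψ (q a) = φ a := by
    intro M _ _ φ hφ
    have key : ∀ a b, q a = q b → φ a = φ b := by
      intro a b hab
      have : q (a - b) = 0 := by rw [map_sub, hab, sub_self]
      have := hφ _ this
      rw [← sub_add_cancel a b, map_add, this, zero_add]
    refine ⟨{ toFun := fun x => φ (Function.surjInv hq x), map_add' := ?_, map_smul' := ?_ }, ?_⟩
    · intro x y
      rw [← map_add]
      apply key
      rw [map_add]; simp only [Function.surjInv_eq]
    · intro c x
      rw [RingHom.id_apply, ← map_smul]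
      apply key
      rw [map_smul]; simp only [Function.surjInv_eq]
    · intro a
      apply key
      exact Function.surjInv_eq hq _
  let gr : ℤ → Submodule k (Q) := fun i => (A.gr i).map q.toLinearMap
  have hgr : ∀ i, ∀ a ∈ A.gr i, q a ∈ gr i := fun i a ha => ⟨a, ha, rfl⟩
  let qi : ∀ i, A.gr i →ₗ[k] gr i := fun i =>
    (q.toLinearMap.comp (A.gr i).subtype).codRestrict (gr i) (fun a => hgr i a a.2)
  let D : A.A →ₗ[k] DirectSum ℤ (fun i => gr i) :=
    (DirectSum.lmap qi).comp (DirectSum.decomposeLinearEquiv A.gr).toLinearMap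
  have hDap : ∀ a i, D a i = qi i (DirectSum.decompose A.gr a i) := fun a i => by
    simp [D, DirectSum.lmap_apply]; rfl
  have hDI : ∀ a, q a = 0 → D a = 0 := by
    intro a ha
    ext i
    rw [hDap]
    exact hI a ha i
  obtain ⟨D', hD'⟩ := desc D hDI
  have hDof : ∀ i (a : A.gr i), D a = DirectSum.lof k ℤ (fun i => gr i) i (qi i a) := by
    intro i a
    simp only [D, LinearMap.comp_apply, LinearEquiv.coe_coe, DirectSum.decomposeLinearEquiv_apply,
      DirectSum.decompose_coe]
    rw [← DirectSum.lof_eq_of k, DirectSum.lmap_lof]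
  have hone : (1 : Q) ∈ gr 0 := ⟨1, SetLike.GradedOne.one_mem, map_one q⟩
  have hmul : ∀ ⦃i j : ℤ⦄ {a b : Q}, a ∈ gr i → b ∈ gr j → a * b ∈ gr (i + j) := by
    rintro i j _ _ ⟨a, ha, rfl⟩ ⟨b, hb, rfl⟩
    exact ⟨a * b, SetLike.GradedMul.mul_mem ha hb, map_mul q a b⟩
  let dec : DirectSum.Decomposition gr := DirectSum.Decomposition.ofLinearMap gr D'
    (by
      ext x
      obtain ⟨a, rfl⟩ := hq x
      rw [LinearMap.comp_apply, hD', LinearMap.id_apply]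
      induction a using DirectSum.Decomposition.inductionOn A.gr with
      | zero => simp
      | homogeneous a => rw [hDof, DirectSum.coeLinearMap_lof]; rfl
      | add a b ha hb => rw [map_add, map_add, ha, hb, map_add])
    (by
      apply DirectSum.linearMap_ext
      intro i
      ext ⟨_, a, ha, rfl⟩ : 1
      simp only [LinearMap.comp_apply, LinearMap.id_apply, DirectSum.coeLinearMap_lof]
      exact (hD' a).trans (hDof i ⟨a, ha⟩))
  let gring : GradedRing gr :=
    { one_mem := hone, mul_mem := hmul, toDecomposition := dec }
  obtain ⟨d', hd'⟩ := desc (q.toLinearMap.comp A.d) (fun a ha => hd a ha)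
  have hd'' : ∀ a, d' (q a) = q (A.d a) := hd'
  let B : DGA k :=
    { A := Q
      gr := gr
      gradedA := gring
      d := d'
      d_sq := by
        intro x; obtain ⟨a, rfl⟩ := hq x
        rw [hd'', hd'', A.d_sq, map_zero]
      d_mem := by
        rintro i _ ⟨a, ha, rfl⟩
        exact ⟨A.d a, A.d_mem i a ha, (hd'' a).symm⟩
      leibniz := by
        rintro i _ ⟨a, ha, rfl⟩ y
        obtain ⟨b, rfl⟩ := hq y
        show d' (q a * q b) = d' (q a) * q b + _ • (q a * d' (q b))
        rw [← map_mul, hd'', A.leibniz i a ha, hd'', hd'', map_add, map_mul, map_zsmul, map_mul] }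
  exact ⟨B, ⟨q, hgr, fun a => (hd'' a).symm⟩, hq, fun _ => Iff.rfl, by
    rintro i _ ⟨a, ha, rfl⟩; exact ⟨a, ha, rfl⟩⟩

lemma exists_quot (A : DGA k) (I : Ideal A.A) [I.IsTwoSided]
    (hI : ∀ a ∈ I, ∀ i, ((DirectSum.decompose A.gr a i : A.gr i) : A.A) ∈ I)
    (hd : ∀ a ∈ I, A.d a ∈ I) :
    ∃ (B : DGA k) (π : DGAHom A B), Function.Surjective π.toFun ∧ (∀ a, π.toFun a = 0 ↔ a ∈ I) ∧
      (∀ i, ∀ b ∈ B.gr i, ∃ a ∈ A.gr i, π.toFun a = b) := by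
  have hq0 : ∀ a, Ideal.Quotient.mkₐ k I a = 0 ↔ a ∈ I := fun a => Ideal.Quotient.eq_zero_iff_mem
  obtain ⟨B, π, h1, h2, h3⟩ := exists_quot_aux A (A.A ⧸ I) (Ideal.Quotient.mkₐ k I)
    (Ideal.Quotient.mkₐ_surjective k I)
    (fun a ha i => (hq0 _).2 (hI a ((hq0 _).1 ha) i)) (fun a ha => (hq0 _).2 (hd a ((hq0 _).1 ha)))
  exact ⟨B, π, h1, fun a => (h2 a).trans (hq0 a), h3⟩

end Quot

section Equiv
variable {k : Type} [CommRing k]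

lemma equiv_of_homotopy (A B : DGA k) (π : DGAHom A B) (hs : Function.Surjective π.toFun)
    (hl : ∀ i, ∀ b ∈ B.gr i, ∃ a ∈ A.gr i, π.toFun a = b)
    (H : A.A → ∀ n, SingN unitInterval n → A.A)
    (hH : IsElemStrongHomotopy A A (fun a => a) (fun a => H a 0 const1) H)
    (hHI : ∀ a, π.toFun a = 0 → ∀ n σ, π.toFun (H a n σ) = 0)
    (hR : ∀ a, π.toFun a = 0 → H a 0 const1 = 0) : StronglyHomotopyEquivalent A B := by
  obtain ⟨hadd, hsmul, hdeg, hgr, h1, h1', hmul, hd, h01⟩ := hH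
  have hc : ∀ n (f : C(TopSimplex n, TopSimplex 0)), ContinuousMap.comp const1 f = ContinuousMap.const _ 1 := by
    intro n f; rfl
  have hRmul0 : ∀ i j, ∀ a ∈ A.gr i, ∀ b ∈ A.gr j, H (a * b) 0 const1 = H a 0 const1 * H b 0 const1 := by
    intro i j a ha b hb
    rw [hmul i j a ha b hb]
    rw [Fin.sum_univ_one]
    simp only [Fin.val_zero, Nat.cast_zero, zero_mul, zpow_zero, Units.val_one, one_smul]
    rfl
  have hz : ∀ n σ, H 0 n σ = 0 := fun n σ => by
    have := hsmul 0 0 n σ; simpa using this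
  have hRmul : ∀ a b, H (a * b) 0 const1 = H a 0 const1 * H b 0 const1 := by
    intro a b
    induction a using DirectSum.Decomposition.inductionOn A.gr with
    | zero => rw [zero_mul, hz, zero_mul]
    | add a a' ha ha' => rw [add_mul, hadd, hadd, ha, ha', add_mul]
    | @homogeneous i a =>
      induction b using DirectSum.Decomposition.inductionOn A.gr with
      | zero => rw [mul_zero, hz, mul_zero]
      | add a a' ha ha' => rw [mul_add, hadd, hadd, ha, ha', mul_add]
      | @homogeneous j b => exact hRmul0 i j a a.2 b b.2
  have hRd : ∀ a, H (A.d a) 0 const1 = A.d (H a 0 const1) := by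
    intro a
    induction a using DirectSum.Decomposition.inductionOn A.gr with
    | zero => rw [map_zero, hz, map_zero]
    | add a a' ha ha' => rw [map_add, hadd, hadd, ha, ha', map_add]
    | @homogeneous i a => exact (hd i a a.2).1 _
  have hsub : ∀ a b n σ, H (a - b) n σ = H a n σ - H b n σ := by
    intro a b n σ
    rw [eq_sub_iff_add_eq, ← hadd, sub_add_cancel]
  have key : ∀ a b, π.toFun a = π.toFun b → ∀ n σ, π.toFun (H a n σ) = π.toFun (H b n σ) := by
    intro a b hab n σ
    have := hHI (a - b) (by rw [map_sub, hab, sub_self]) n σ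
    rwa [hsub, map_sub, sub_eq_zero] at this
  have key1 : ∀ a b, π.toFun a = π.toFun b → H a 0 const1 = H b 0 const1 := by
    intro a b hab
    have := hR (a - b) (by rw [map_sub, hab, sub_self])
    rwa [hsub, sub_eq_zero] at this
  have hsi : ∀ b, π.toFun (Function.surjInv hs b) = b := Function.surjInv_eq hs
  let s := Function.surjInv hs
  let gl : B.A →ₗ[k] A.A :=
    { toFun := fun b => H (s b) 0 const1
      map_add' := fun b b' => by
        rw [← hadd]; apply key1; rw [map_add]; simp only [s, hsi]
      map_smul' := fun c b => by
        rw [RingHom.id_apply, ← hsmul]; apply key1; rw [map_smul]; simp only [s, hsi] }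
  have hgl : ∀ a, gl (π.toFun a) = H a 0 const1 := fun a => key1 _ _ (hsi _)
  let ga : B.A →ₐ[k] A.A := AlgHom.ofLinearMap gl
    (by rw [← map_one π.toFun, hgl, h1])
    (by
      intro x y
      obtain ⟨a, rfl⟩ := hs x
      obtain ⟨b, rfl⟩ := hs y
      rw [← map_mul, hgl, hgl, hgl, hRmul])
  have hga : ∀ a, ga (π.toFun a) = H a 0 const1 := hgl
  let g : DGAHom B A := ⟨ga, by
    intro i b hb
    obtain ⟨a, ha, rfl⟩ := hl i b hb
    rw [hga]
    have := hgr i a ha 0 const1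
    simpa using this, by
    intro x
    obtain ⟨a, rfl⟩ := hs x
    rw [← π.map_d, hga, hga, hRd]⟩
  have hg : ∀ a, g.toFun (π.toFun a) = H a 0 const1 := hgl
  obtain ⟨H', hH'⟩ : ∃ H' : B.A → ∀ n, SingN unitInterval n → B.A,
      ∀ a n σ, H' (π.toFun a) n σ = π.toFun (H a n σ) :=
    ⟨fun b n σ => π.toFun (H (s b) n σ), fun a n σ => key _ _ (hsi _) n σ⟩
  refine ⟨π, g, Relation.EqvGen.symm _ _ (Relation.EqvGen.rel _ _ ⟨H', ?_⟩),
    Relation.EqvGen.symm _ _ (Relation.EqvGen.rel _ _ ⟨H, ?_⟩)⟩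
  · refine ⟨?_, ?_, ?_, ?_, ?_, ?_, ?_, ?_, ?_⟩
    · intro x y n σ
      obtain ⟨a, rfl⟩ := hs x
      obtain ⟨b, rfl⟩ := hs y
      rw [← map_add, hH', hH', hH', hadd, map_add]
    · intro c x n σ
      obtain ⟨a, rfl⟩ := hs x
      rw [← map_smul, hH', hH', hsmul, map_smul]
    · intro x n i τ
      obtain ⟨a, rfl⟩ := hs x
      exact (hH' a _ _).trans ((congrArg _ (hdeg a n i τ)).trans (map_zero _))
    · intro i x hx n σ
      obtain ⟨a, ha, rfl⟩ := hl i x hx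
      rw [hH']
      exact π.map_gr _ _ (hgr i a ha n σ)
    · intro σ
      rw [← map_one π.toFun, hH', h1]
    · intro n σ
      rw [← map_one π.toFun, hH', h1', map_zero]
    · intro i j x hx y hy n σ
      obtain ⟨a, ha, rfl⟩ := hl i x hx
      obtain ⟨b, hb, rfl⟩ := hl j y hy
      rw [← map_mul, hH', hmul i j a ha b hb, map_sum]
      apply Finset.sum_congr rfl
      intro p _
      rw [map_zsmul, map_mul]
      exact congrArg₂ (fun x y => _ • (x * y)) (hH' a _ _).symm (hH' b _ _).symm
    · intro i x hx
      obtain ⟨a, ha, rfl⟩ := hl i x hx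
      refine ⟨?_, ?_⟩
      · intro σ
        rw [← π.map_d, hH', hH', (hd i a ha).1, π.map_d]
      · intro n σ
        rw [← π.map_d, hH', hH', (hd i a ha).2, map_add, π.map_d, map_zsmul, map_sum]
        congr 2
        apply Finset.sum_congr rfl
        intro p _
        rw [map_zsmul]
        exact congrArg (fun x => _ • x) (hH' a _ _).symm
    · intro x
      obtain ⟨a, rfl⟩ := hs x
      rw [hH', hH', (h01 a).1]
      refine ⟨rfl, ?_⟩
      show _ = π.toFun (g.toFun (π.toFun a))
      rw [hg]
  · refine ⟨hadd, hsmul, hdeg, hgr, h1, h1', hmul, hd, ?_⟩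
    intro a
    refine ⟨(h01 a).1, (hg a).symm⟩

end Equiv

section Pres
universe u
variable {k : Type} [CommRing k] {X : SSet.{u}} {CX : DGA k}
  {E : CX.A → ∀ n : ℕ, X.obj (Opposite.op (SimplexCategory.mk n)) → k}

lemma E_add (hX : IsCochainPresentation X CX E) (a b n σ) : E (a + b) n σ = E a n σ + E b n σ := hX.1 a b n σ
lemma E_smul (hX : IsCochainPresentation X CX E) (c : k) (a n σ) : E (c • a) n σ = c * E a n σ :=
  hX.2.1 c a n σ
lemma E_zero (hX : IsCochainPresentation X CX E) (n σ) : E 0 n σ = 0 := by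
  have := E_smul hX 0 0 n σ
  simpa using this
lemma E_neg (hX : IsCochainPresentation X CX E) (a n σ) : E (-a) n σ = - E a n σ := by
  have := E_smul hX (-1) a n σ
  simpa using this
lemma E_sub (hX : IsCochainPresentation X CX E) (a b n σ) : E (a - b) n σ = E a n σ - E b n σ := by
  rw [sub_eq_add_neg, E_add hX, E_neg hX, sub_eq_add_neg]
lemma E_sum (hX : IsCochainPresentation X CX E) {ι : Type*} (s : Finset ι) (f : ι → CX.A) (n σ) :
    E (∑ i ∈ s, f i) n σ = ∑ i ∈ s, E (f i) n σ := by
  induction s using Finset.cons_induction with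
  | empty => simp [E_zero hX]
  | cons a s ha ih => rw [Finset.sum_cons, Finset.sum_cons, E_add hX, ih]
lemma E_zsmul (hX : IsCochainPresentation X CX E) (c : ℤ) (a n σ) : E (c • a) n σ = c * E a n σ := by
  rw [← Int.cast_smul_eq_zsmul k, E_smul hX]

lemma E_ne (hX : IsCochainPresentation X CX E) {m : ℤ} {a} (ha : a ∈ CX.gr m) {n : ℕ} (h : (n : ℤ) ≠ m) (σ) :
    E a n σ = 0 := hX.2.2.2.2.1 m a ha n σ h

lemma gr_neg (hX : IsCochainPresentation X CX E) {m : ℤ} {a} (ha : a ∈ CX.gr m) (h : m < 0) : a = 0 := by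
  have := hX.2.2.2.1 m h
  rw [this] at ha
  simpa using ha

lemma E_dec (hX : IsCochainPresentation X CX E) (a) (n : ℕ) (σ) :
    E (DirectSum.decompose CX.gr a (n : ℤ) : CX.A) n σ = E a n σ := by
  induction a using DirectSum.Decomposition.inductionOn CX.gr with
  | zero => simp
  | add a b ha hb =>
    rw [DirectSum.decompose_add, DirectSum.add_apply, Submodule.coe_add, E_add hX, E_add hX, ha, hb]
  | @homogeneous i a =>
    by_cases h : i = n
    · subst h
      rw [DirectSum.decompose_of_mem_same _ a.2]
    · rw [DirectSum.decompose_of_mem_ne _ a.2 h, E_zero hX, E_ne hX a.2 (Ne.symm h)]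

lemma E_ext0 (hX : IsCochainPresentation X CX E) (a) (h : ∀ n σ, E a n σ = 0) : a = 0 := by
  apply (DirectSum.decompose CX.gr).injective
  rw [DirectSum.decompose_zero]
  ext i
  rw [DirectSum.zero_apply, ZeroMemClass.coe_zero]
  rcases lt_or_ge i 0 with hi | hi
  · exact gr_neg hX (SetLike.coe_mem _) hi
  · lift i to ℕ using hi
    apply hX.2.2.2.2.2.1 _ _ (SetLike.coe_mem _)
    intro n σ
    by_cases hn : n = i
    · subst hn; rw [E_dec hX, h]
    · exact E_ne hX (SetLike.coe_mem _) (by exact_mod_cast hn) σ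

lemma E_ext (hX : IsCochainPresentation X CX E) {a b} (h : ∀ n σ, E a n σ = E b n σ) : a = b := by
  rw [← sub_eq_zero]
  apply E_ext0 hX
  intro n σ
  rw [E_sub hX, h, sub_self]

lemma mem_gr (hX : IsCochainPresentation X CX E) {m : ℤ} {a} (h : ∀ n : ℕ, (n : ℤ) ≠ m → ∀ σ, E a n σ = 0) :
    a ∈ CX.gr m := by
  have : a = DirectSum.decompose CX.gr a m := by
    apply E_ext hX
    intro n σ
    by_cases hn : (n : ℤ) = m
    · subst hn; rw [E_dec hX]
    · rw [h n hn, E_ne hX (SetLike.coe_mem _) hn]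
  rw [this]
  exact SetLike.coe_mem _

lemma E_bdd (hX : IsCochainPresentation X CX E) (a) : ∃ N : ℕ, ∀ n, N ≤ n → ∀ σ, E a n σ = 0 := by
  induction a using DirectSum.Decomposition.inductionOn CX.gr with
  | zero => exact ⟨0, fun n _ σ => E_zero hX n σ⟩
  | add a b ha hb =>
    obtain ⟨N, hN⟩ := ha
    obtain ⟨M, hM⟩ := hb
    refine ⟨max N M, fun n hn σ => ?_⟩
    rw [E_add hX, hN n (le_trans (le_max_left _ _) hn), hM n (le_trans (le_max_right _ _) hn), add_zero]
  | @homogeneous i a =>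
    refine ⟨i.toNat + 1, fun n hn σ => E_ne hX a.2 (by omega) σ⟩

lemma E_exists1 (hX : IsCochainPresentation X CX E) (c : ∀ n : ℕ, X.obj (Opposite.op (SimplexCategory.mk n)) → k)
    (hc : ∀ n i τ, c (n + 1) (X.map (SimplexCategory.σ i).op τ) = 0) (n : ℕ) :
    ∃ a ∈ CX.gr n, ∀ σ, E a n σ = c n σ := by
  cases n with
  | zero => exact hX.2.2.2.2.2.2.1 (c 0)
  | succ n =>
    have := hX.2.2.2.2.2.2.2.1 n (c (n + 1)) (hc n)
    exact_mod_cast this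

lemma E_exists (hX : IsCochainPresentation X CX E) (c : ∀ n : ℕ, X.obj (Opposite.op (SimplexCategory.mk n)) → k)
    (hc : ∀ n i τ, c (n + 1) (X.map (SimplexCategory.σ i).op τ) = 0)
    (hN : ∃ N : ℕ, ∀ n, N ≤ n → ∀ σ, c n σ = 0) :
    ∃ a, ∀ n σ, E a n σ = c n σ := by
  choose f hf hf' using E_exists1 hX c hc
  obtain ⟨N, hN⟩ := hN
  refine ⟨∑ n ∈ Finset.range N, f n, fun n σ => ?_⟩
  rw [E_sum hX]
  by_cases hn : n < N
  · rw [Finset.sum_eq_single n, hf']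
    · intro m _ hm
      exact E_ne hX (hf m) (by exact_mod_cast hm.symm) σ
    · intro h; exact absurd (Finset.mem_range.2 hn) h
  · rw [hN n (by omega)]
    apply Finset.sum_eq_zero
    intro m hm
    have := Finset.mem_range.1 hm
    exact E_ne hX (hf m) (by exact_mod_cast (by omega : n ≠ m)) σ

lemma E_dg (hX : IsCochainPresentation X CX E) (a) (n m : ℕ) (h : m < n)
    (f : SimplexCategory.mk n ⟶ SimplexCategory.mk m) (y) : E a n (X.map f.op y) = 0 := by
  obtain ⟨n, rfl⟩ : ∃ n', n = n' + 1 := ⟨n - 1, by omega⟩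
  have : X.map f.op y ∈ X.degenerate (n + 1) := ⟨m, h, f, y, rfl⟩
  rw [SSet.degenerate_eq_iUnion_range_σ] at this
  obtain ⟨i, τ, hτ⟩ := Set.mem_iUnion.1 this
  rw [← hτ]
  exact hX.2.2.1 a n i τ

lemma E_d_all (hX : IsCochainPresentation X CX E) (a) (n : ℕ)
    (σ : X.obj (Opposite.op (SimplexCategory.mk (n + 1)))) :
    E (CX.d a) (n + 1) σ = ∑ i : Fin (n + 2), (-1) ^ (i : ℕ) * E a n (X.map (SimplexCategory.δ i).op σ) := by
  induction a using DirectSum.Decomposition.inductionOn CX.gr with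
  | zero => simp [E_zero hX]
  | add a b ha hb =>
    rw [map_add, E_add hX, ha, hb, ← Finset.sum_add_distrib]
    apply Finset.sum_congr rfl
    intro i _
    rw [E_add hX, mul_add]
  | @homogeneous i a =>
    by_cases h : i = n
    · subst h
      rw [hX.2.2.2.2.2.2.2.2.2.2.2 n a a.2]
      apply Finset.sum_congr rfl
      intro i _
      rw [zsmul_eq_mul]
      push_cast
      rfl
    · rw [E_ne hX (CX.d_mem i a a.2) (by push_cast; omega)]
      rw [Finset.sum_eq_zero]
      intro l _
      rw [E_ne hX a.2 (Ne.symm h), mul_zero]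

lemma E_d_zero (hX : IsCochainPresentation X CX E) (a) (σ : X.obj (Opposite.op (SimplexCategory.mk 0))) :
    E (CX.d a) 0 σ = 0 := by
  induction a using DirectSum.Decomposition.inductionOn CX.gr with
  | zero => simp [E_zero hX]
  | add a b ha hb => rw [map_add, E_add hX, ha, hb, add_zero]
  | @homogeneous i a =>
    by_cases h : i + 1 = 0
    · rw [gr_neg hX a.2 (by omega), map_zero, E_zero hX]
    · exact E_ne hX (CX.d_mem i a a.2) (by push_cast; omega) σ

lemma E_mul_all (hX : IsCochainPresentation X CX E) (a b) (n : ℕ)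
    (σ : X.obj (Opposite.op (SimplexCategory.mk n))) :
    E (a * b) n σ = ∑ p : Fin (n + 1), E a p (X.map (frontHom p n (by omega)).op σ) *
      E b (n - p) (X.map (backHom (n - p) n (by omega)).op σ) := by
  induction a using DirectSum.Decomposition.inductionOn CX.gr with
  | zero => simp [E_zero hX]
  | add a a' ha hb =>
    rw [add_mul, E_add hX, ha, hb, ← Finset.sum_add_distrib]
    apply Finset.sum_congr rfl
    intro i _
    rw [E_add hX, add_mul]
  | @homogeneous i a =>
    induction b using DirectSum.Decomposition.inductionOn CX.gr with
    | zero => simp [E_zero hX]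
    | add b b' ha hb =>
      rw [mul_add, E_add hX, ha, hb, ← Finset.sum_add_distrib]
      apply Finset.sum_congr rfl
      intro i _
      rw [E_add hX, mul_add]
    | @homogeneous j b =>
      rcases lt_or_ge i 0 with hi | hi
      · rw [gr_neg hX a.2 hi]; simp [E_zero hX]
      rcases lt_or_ge j 0 with hj | hj
      · rw [gr_neg hX b.2 hj]; simp [E_zero hX]
      lift i to ℕ using hi
      lift j to ℕ using hj
      by_cases hn : n = i + j
      · subst hn
        rw [hX.2.2.2.2.2.2.2.2.2.2.1 i j a a.2 b b.2, Finset.sum_eq_single ⟨i, by omega⟩]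
        · have aux : ∀ w w' : ℕ, w = w' → ∀ (hw : w ≤ i + j) (hw' : w' ≤ i + j),
              E b w (X.map (backHom w (i + j) hw).op σ) = E b w' (X.map (backHom w' (i + j) hw').op σ) := by
            rintro w _ rfl _ _; rfl
          exact congrArg₂ (· * ·) rfl (aux _ _ (by simp) _ _)
        · intro r _ hr
          have : (r : ℕ) ≠ i := fun h => hr (Fin.ext h)
          rw [E_ne hX a.2 (by exact_mod_cast this), zero_mul]
        · simp
      · rw [E_ne hX (SetLike.GradedMul.mul_mem a.2 b.2) (by push_cast; omega), Finset.sum_eq_zero]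
        intro r _
        by_cases h : (r : ℕ) = i
        · rw [E_ne hX b.2 (by have := r.2; push_cast; omega), mul_zero]
        · rw [E_ne hX a.2 (by exact_mod_cast h), zero_mul]

end Pres

section ZZ
universe u

def Mon (N m : ℕ) (g : ℕ → ℕ) : Prop := (∀ s < N, g s ≤ g (s + 1)) ∧ ∀ t ≤ N, g t ≤ m

lemma Mon.le {N m : ℕ} {g : ℕ → ℕ} (h : Mon N m g) {s t : ℕ} (hst : s ≤ t) (ht : t ≤ N) : g s ≤ g t := by
  induction t, hst using Nat.le_induction with
  | base => exact le_rfl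
  | succ t hst ih => exact (ih (by omega)).trans (h.1 t (by omega))

def homOf (N m : ℕ) (g : ℕ → ℕ) : SimplexCategory.mk N ⟶ SimplexCategory.mk m :=
  SimplexCategory.mkHom ⟨fun t => ⟨min (partialSups g (t : ℕ)) m, by omega⟩, fun s t hst => by
    simp only [Fin.mk_le_mk]
    exact min_le_min_right m ((partialSups g).monotone hst)⟩

lemma homOf_val {N m : ℕ} {g : ℕ → ℕ} (h : Mon N m g) (t : Fin (N + 1)) :
    ((homOf N m g).toOrderHom t : ℕ) = g t := by
  have h1 : partialSups g (t : ℕ) = g t := by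
    apply le_antisymm
    · apply partialSups_le
      intro i hi
      exact h.le hi (by omega)
    · exact le_partialSups g _
  change min (partialSups g (t : ℕ)) m = g t
  rw [h1]
  exact min_eq_left (h.2 t (by omega))

lemma hom_ext_val {N m : ℕ} {f g : SimplexCategory.mk N ⟶ SimplexCategory.mk m}
    (h : ∀ t : Fin (N + 1), (f.toOrderHom t : ℕ) = (g.toOrderHom t : ℕ)) : f = g := by
  apply SimplexCategory.Hom.ext
  ext t
  exact h t

lemma homOf_congr {N m : ℕ} {g g' : ℕ → ℕ} (h : ∀ t ≤ N, g t = g' t) : homOf N m g = homOf N m g' := by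
  apply hom_ext_val
  intro t
  change min (partialSups g (t : ℕ)) m = min (partialSups g' (t : ℕ)) m
  congr 1
  apply le_antisymm
  · apply partialSups_le
    intro i hi
    rw [h i (by omega)]
    exact le_partialSups_of_le g' hi
  · apply partialSups_le
    intro i hi
    rw [← h i (by omega)]
    exact le_partialSups_of_le g hi

variable {X : SSet.{u}}

def ZZ (Θ : ∀ n : SimplexCategory, X.obj (.op n) → (Fin (n.len+1) → Bool) → X.obj (.op n))
    {m : ℕ} (N : ℕ) (x : X.obj (.op (SimplexCategory.mk m))) (f : ℕ → ℕ × Bool) :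
    X.obj (.op (SimplexCategory.mk N)) :=
  Θ (SimplexCategory.mk N) (X.map (homOf N m (fun t => (f t).1)).op x) (fun t => (f (t : ℕ)).2)

variable {Θ : ∀ n : SimplexCategory, X.obj (.op n) → (Fin (n.len+1) → Bool) → X.obj (.op n)}

lemma ZZ_loc {m : ℕ} (N : ℕ) (x : X.obj (.op (SimplexCategory.mk m))) (f g : ℕ → ℕ × Bool)
    (h : ∀ t ≤ N, f t = g t) : ZZ Θ N x f = ZZ Θ N x g := by
  unfold ZZ
  rw [homOf_congr (g' := fun t => (g t).1) (fun t ht => by simp only [h t ht])]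
  congr 1
  funext t
  have : (t : ℕ) < N + 1 := t.2
  rw [h t (by omega)]

lemma ZZ_map (hΘ : ∀ n m (θ : m ⟶ n) x ε, Θ m (X.map θ.op x) (ε ∘ θ.toOrderHom) = X.map θ.op (Θ n x ε))
    {m : ℕ} (N M : ℕ) (x : X.obj (.op (SimplexCategory.mk m))) (f g : ℕ → ℕ × Bool)
    (hf : Mon N m (fun t => (f t).1)) (θ : SimplexCategory.mk M ⟶ SimplexCategory.mk N)
    (hg : ∀ t : Fin (M + 1), g t = f (θ.toOrderHom t : ℕ)) :
    ZZ Θ M x g = X.map θ.op (ZZ Θ N x f) := by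
  unfold ZZ
  rw [← hΘ, map_map]
  have hgm : Mon M m (fun t => (g t).1) := by
    constructor
    · intro s hs
      have h1 := hg ⟨s, by omega⟩
      have h2 := hg ⟨s + 1, by omega⟩
      simp only at h1 h2
      simp only [h1, h2]
      apply hf.le
      · exact θ.toOrderHom.monotone (by simp)
      · exact Nat.le_of_lt_succ (θ.toOrderHom ⟨s + 1, by simp; omega⟩).2
    · intro t ht
      have h1 := hg ⟨t, by omega⟩
      simp only at h1
      simp only [h1]
      exact hf.2 _ (Nat.le_of_lt_succ (θ.toOrderHom ⟨t, by simp; omega⟩).2)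
  have e1 : homOf M m (fun t => (g t).1) = θ ≫ homOf N m (fun t => (f t).1) := by
    apply hom_ext_val
    intro t
    rw [homOf_val hgm]
    refine Eq.trans ?_ (homOf_val hf (θ.toOrderHom t)).symm
    simp only [hg]
  rw [e1]
  congr 1
  funext t
  simp only [Function.comp]
  rw [← hg t]

lemma ZZ_comp {m m' : ℕ} (N : ℕ) (x : X.obj (.op (SimplexCategory.mk m)))
    (φ : SimplexCategory.mk m' ⟶ SimplexCategory.mk m) (φn : ℕ → ℕ)
    (hφ : ∀ i : Fin (m' + 1), (φ.toOrderHom i : ℕ) = φn i) (f : ℕ → ℕ × Bool)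
    (hf : Mon N m' (fun t => (f t).1)) :
    ZZ Θ N (X.map φ.op x) f = ZZ Θ N x (fun t => (φn (f t).1, (f t).2)) := by
  unfold ZZ
  rw [map_map]
  have hgm : Mon N m (fun t => φn (f t).1) := by
    constructor
    · intro s hs
      have h1 := hφ ⟨(f s).1, Nat.lt_succ_of_le (hf.2 s (by omega))⟩
      have h2 := hφ ⟨(f (s + 1)).1, Nat.lt_succ_of_le (hf.2 (s + 1) (by omega))⟩
      simp only at h1 h2
      simp only [← h1, ← h2]
      exact φ.toOrderHom.monotone (by simp; exact hf.1 s hs)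
    · intro t ht
      have h1 := hφ ⟨(f t).1, Nat.lt_succ_of_le (hf.2 t (by omega))⟩
      simp only at h1
      simp only [← h1]
      exact Nat.le_of_lt_succ (φ.toOrderHom ⟨(f t).1, _⟩).2
  have e1 : homOf N m' (fun t => (f t).1) ≫ φ = homOf N m (fun t => φn (f t).1) := by
    apply hom_ext_val
    intro t
    rw [homOf_val hgm, ← homOf_val hf t]
    exact hφ _
  rw [e1]

lemma ZZ_deg {k : Type} [CommRing k] {CX : DGA k}
    {E : CX.A → ∀ n : ℕ, X.obj (Opposite.op (SimplexCategory.mk n)) → k}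
    (hX : IsCochainPresentation X CX E)
    (hΘ : ∀ n m (θ : m ⟶ n) x ε, Θ m (X.map θ.op x) (ε ∘ θ.toOrderHom) = X.map θ.op (Θ n x ε))
    {m : ℕ} (N : ℕ) (x : X.obj (.op (SimplexCategory.mk m))) (f : ℕ → ℕ × Bool)
    (hf : Mon N m (fun t => (f t).1)) (t : ℕ) (ht : t < N) (htt : f t = f (t + 1)) (a) :
    E a N (ZZ Θ N x f) = 0 := by
  obtain ⟨N, rfl⟩ : ∃ N', N = N' + 1 := ⟨N - 1, by omega⟩
  have hmon : Mon (N + 1) N (fun s => if s ≤ t then s else s - 1) := by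
    constructor
    · intro s hs
      simp only
      split_ifs <;> omega
    · intro s hs
      simp only
      split_ifs <;> omega
  have := ZZ_map hΘ N (N + 1) x (fun s => f (sk t s)) f (m := m) (by
      constructor
      · intro s hs
        simp only
        apply hf.le
        · unfold sk; split_ifs <;> omega
        · unfold sk; split_ifs <;> omega
      · intro s hs
        simp only
        apply hf.2
        unfold sk; split_ifs <;> omega) (homOf (N + 1) N (fun s => if s ≤ t then s else s - 1)) (by
      intro s
      rw [homOf_val hmon]
      unfold sk
      by_cases h1 : (s : ℕ) < t
      · simp [h1, h1.le]
      · by_cases h2 : (s : ℕ) = t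
        · simp [h2, htt]
        · rw [if_neg (by omega : ¬ (s : ℕ) ≤ t), if_neg (by omega)]
          congr 1; omega)
  rw [this]
  exact E_dg hX a _ _ (by omega) _ _

lemma IsPath.mono {m n f g} (h : IsPath m n f g) : Mon (m + n) m f := by
  have h1 : ∀ s < m + n, f s ≤ f (s + 1) := by
    intro s hs
    have := h.step s hs
    omega
  refine ⟨h1, ?_⟩
  have h2 : ∀ s, s ≤ m + n → f (m + n - s) ≤ m := by
    intro s
    induction s with
    | zero => intro _; simp [h.fN]
    | succ s ih =>
      intro hs
      have := h1 (m + n - (s + 1)) (by omega)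
      rw [show m + n - (s + 1) + 1 = m + n - s by omega] at this
      exact this.trans (ih (by omega))
  intro t ht
  have := h2 (m + n - t) (by omega)
  rwa [show m + n - (m + n - t) = t by omega] at this

lemma IsPath.swap {m n f g} (h : IsPath m n f g) : IsPath n m g f := by
  refine ⟨h.g0, h.f0, ?_, ?_, ?_⟩
  · intro t ht
    have := h.step t (by omega)
    omega
  · rw [add_comm]; exact h.gN
  · rw [add_comm]; exact h.fN

lemma IsPath.mono' {m n f g} (h : IsPath m n f g) : Mon (m + n) n g := by
  rw [add_comm]; exact h.swap.mono

lemma IsPath.exists_step {m n f g} (h : IsPath m n f g) (i : ℕ) (hi : i < m) :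
    ∃ t < m + n, f t = i ∧ f (t + 1) = i + 1 ∧ g (t + 1) = g t := by
  have hex : ∃ t, t ≤ m + n ∧ i < f t := ⟨m + n, le_rfl, by rw [h.fN]; exact hi⟩
  classical
  obtain ⟨h1, h2⟩ := Nat.find_spec hex
  set t := Nat.find hex with ht
  have ht0 : t ≠ 0 := by
    intro h0
    rw [h0, h.f0] at h2
    omega
  have h3 := Nat.find_min hex (m := t - 1) (by omega)
  have h4 : f (t - 1) ≤ i := by
    by_contra hc
    exact h3 ⟨by omega, by omega⟩
  have h5 := h.step (t - 1) (by omega)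
  rw [show t - 1 + 1 = t by omega] at h5
  refine ⟨t - 1, by omega, ?_⟩
  rw [show t - 1 + 1 = t by omega]
  omega

lemma IsPath.exists_step' {m n f g} (h : IsPath m n f g) (i : ℕ) (hi : i < n) :
    ∃ t < m + n, g t = i ∧ g (t + 1) = i + 1 ∧ f (t + 1) = f t := by
  obtain ⟨t, h1, h2⟩ := h.swap.exists_step i hi
  exact ⟨t, by omega, h2⟩

end ZZ

section Lab

lemma vertAffine_vertexPt {m n : ℕ} (v : Fin (m + 1) → Fin (n + 1)) (j) :
    vertAffine v (vertexPt m j) = vertexPt n (v j) := by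
  apply Subtype.ext
  funext i
  change ∑ i' ∈ Finset.univ.filter (fun i' => v i' = i), (if i' = j then (1 : ℝ) else 0) = if i = v j then 1 else 0
  rw [Finset.sum_ite_eq']
  simp [eq_comm]

open scoped Classical in
noncomputable def lab (n : ℕ) (σ : SingN unitInterval n) (j : ℕ) : Bool :=
  decide (DFunLike.coe (F := C(TopSimplex n, unitInterval)) σ (vertexPt n ⟨min j n, by omega⟩) = 1)

lemma lab_comp {m n : ℕ} (v : Fin (m + 1) → Fin (n + 1)) (σ : SingN unitInterval n) (j : ℕ) (hj : j ≤ m) :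
    lab m (ContinuousMap.comp σ (vertAffine v)) j = lab n σ (v ⟨j, by omega⟩ : ℕ) := by
  unfold lab
  have : (⟨min j m, by omega⟩ : Fin (m + 1)) = ⟨j, by omega⟩ := Fin.ext (by simp [hj])
  have h2 : (⟨min (v ⟨j, by omega⟩ : ℕ) n, by omega⟩ : Fin (n + 1)) = v ⟨j, by omega⟩ :=
    Fin.ext (by have := (v ⟨j, by omega⟩).2; simp; omega)
  rw [h2, this, ← vertAffine_vertexPt]
  rfl

lemma lab_const0 (j) : lab 0 const0 j = false := by
  unfold lab
  rw [decide_eq_false_iff_not]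
  change ¬ ((0 : unitInterval) = 1)
  exact zero_ne_one

lemma lab_const1 (j) : lab 0 const1 j = true := by
  unfold lab
  rw [decide_eq_true_iff]
  rfl

end Lab

section HVs
universe u
variable {k : Type} [CommRing k] {X : SSet.{u}} {CX : DGA k}
  {E : CX.A → ∀ n : ℕ, X.obj (Opposite.op (SimplexCategory.mk n)) → k}
  {Θ : ∀ n : SimplexCategory, X.obj (.op n) → (Fin (n.len+1) → Bool) → X.obj (.op n)}

def HV (E : CX.A → ∀ n : ℕ, X.obj (Opposite.op (SimplexCategory.mk n)) → k)
    (Θ : ∀ n : SimplexCategory, X.obj (.op n) → (Fin (n.len+1) → Bool) → X.obj (.op n))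
    (a : CX.A) (n : ℕ) (L : ℕ → Bool) (p : ℕ) (x : X.obj (.op (SimplexCategory.mk p))) : k :=
  Sh p n (fun i j => (i, L j)) (fun f => E a (p + n) (ZZ Θ (p + n) x f))

lemma HV_congr (a : CX.A) (n : ℕ) (L L' : ℕ → Bool) (h : ∀ j ≤ n, L j = L' j) (p : ℕ)
    (x : X.obj (.op (SimplexCategory.mk p))) : HV E Θ a n L p x = HV E Θ a n L' p x := by
  apply Sh_congr _ _ _ rfl
  intro f g hfg
  congr 1
  apply ZZ_loc
  intro t ht
  rw [h _ (hfg.mono'.2 t ht)]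

lemma HV_norm (hX : IsCochainPresentation X CX E)
    (hΘ : ∀ n m (θ : m ⟶ n) x ε, Θ m (X.map θ.op x) (ε ∘ θ.toOrderHom) = X.map θ.op (Θ n x ε))
    (a n L) (p : ℕ) (i : Fin (p + 1)) (y : X.obj (.op (SimplexCategory.mk p))) :
    HV E Θ a n L (p + 1) (X.map (SimplexCategory.σ i).op y) = 0 := by
  apply Sh_eq_zero
  intro f g hfg
  simp only
  have hφ : ∀ s : Fin (p + 1 + 1), ((SimplexCategory.σ i).toOrderHom s : ℕ) =
      (fun s : ℕ => if s ≤ (i : ℕ) then s else s - 1) s := by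
    intro s
    change ((Fin.predAbove i s : Fin (p + 1)) : ℕ) = _
    by_cases h : (s : ℕ) ≤ (i : ℕ)
    · rw [Fin.predAbove_of_le_castSucc i s (by simpa [Fin.le_def] using h)]
      simp [h]
    · rw [Fin.predAbove_of_castSucc_lt i s (by simp [Fin.lt_def]; omega)]
      simp [h]
  rw [ZZ_comp _ _ _ (fun s : ℕ => if s ≤ (i : ℕ) then s else s - 1) hφ _ hfg.mono]
  obtain ⟨t, ht, h1, h2, h3⟩ := hfg.exists_step i (by omega)
  refine ZZ_deg hX hΘ _ _ _ ?_ t ht ?_ a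
  · have := hfg.mono
    constructor
    · intro s hs
      have := this.1 s hs
      simp only
      split_ifs <;> omega
    · intro s hs
      have := this.2 s hs
      simp only
      split_ifs <;> omega
  · simp only [h1, h2, h3]
    simp

lemma HV_deg (hX : IsCochainPresentation X CX E)
    (hΘ : ∀ n m (θ : m ⟶ n) x ε, Θ m (X.map θ.op x) (ε ∘ θ.toOrderHom) = X.map θ.op (Θ n x ε))
    (a) (n : ℕ) (L : ℕ → Bool) (i : ℕ) (hi : i < n) (hL : L i = L (i + 1)) (p : ℕ)
    (x : X.obj (.op (SimplexCategory.mk p))) :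
    HV E Θ a n L p x = 0 := by
  apply Sh_eq_zero
  intro f g hfg
  obtain ⟨t, ht, h1, h2, h3⟩ := hfg.exists_step' i hi
  refine ZZ_deg hX hΘ _ _ _ hfg.mono t ht ?_ a
  simp only [h1, h2, h3, hL]

lemma HV_gr (hX : IsCochainPresentation X CX E) {i : ℤ} {a} (ha : a ∈ CX.gr i) (n : ℕ) (L) (p : ℕ)
    (h : (p : ℤ) + n ≠ i) (x : X.obj (.op (SimplexCategory.mk p))) : HV E Θ a n L p x = 0 := by
  apply Sh_eq_zero
  intro f g hfg
  exact E_ne hX ha (by push_cast; exact h) _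

lemma HV_add (hX : IsCochainPresentation X CX E) (a b n L) (p : ℕ) (x : X.obj (.op (SimplexCategory.mk p))) :
    HV E Θ (a + b) n L p x = HV E Θ a n L p x + HV E Θ b n L p x := by
  unfold HV
  rw [← Sh_add]
  simp only [E_add hX]

lemma HV_smul (hX : IsCochainPresentation X CX E) (c : k) (a n L) (p : ℕ)
    (x : X.obj (.op (SimplexCategory.mk p))) :
    HV E Θ (c • a) n L p x = c * HV E Θ a n L p x := by
  unfold HV
  rw [← Sh_mul]
  simp only [E_smul hX]

lemma HV_zero (hX : IsCochainPresentation X CX E) (n L) (p : ℕ)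
    (x : X.obj (.op (SimplexCategory.mk p))) :
    HV E Θ 0 n L p x = 0 := by
  have := HV_smul (Θ := Θ) hX 0 0 n L p x
  simpa using this

lemma HV_n0 (a L) (p : ℕ) (x : X.obj (.op (SimplexCategory.mk p))) :
    HV E Θ a 0 L p x = E a p (Θ (.mk p) x (fun _ => L 0)) := by
  have h : HV E Θ a 0 L p x = E a p (ZZ Θ p x (fun t => (t, L 0))) := by
    apply Sh_loc_zero
    intro f g hfg
    exact congrArg _ (ZZ_loc _ _ _ _ hfg)
  rw [h]
  unfold ZZ
  have : homOf p p (fun t => t) = 𝟙 _ := by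
    apply hom_ext_val
    intro t
    rw [homOf_val]
    · rfl
    · exact ⟨fun s _ => Nat.le_succ s, fun t h => h⟩
  rw [map_idd _ this]

lemma HV_one (hX : IsCochainPresentation X CX E) (L) (p : ℕ) (x : X.obj (.op (SimplexCategory.mk p))) :
    HV E Θ 1 0 L p x = E 1 p x := by
  rw [HV_n0]
  cases p with
  | zero => rw [hX.2.2.2.2.2.2.2.2.1, hX.2.2.2.2.2.2.2.2.1]
  | succ p => rw [hX.2.2.2.2.2.2.2.2.2.1, hX.2.2.2.2.2.2.2.2.2.1]

lemma HV_one' (hX : IsCochainPresentation X CX E) (n L) (p : ℕ) (x : X.obj (.op (SimplexCategory.mk p))) :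
    HV E Θ 1 (n + 1) L p x = 0 := by
  apply Sh_eq_zero
  intro f g hfg
  exact hX.2.2.2.2.2.2.2.2.2.1 _ _

lemma HV_pull (a : CX.A) (n : ℕ) (L : ℕ → Bool) (p q N : ℕ) (h : p + n = N) (φ : SimplexCategory.mk p ⟶ SimplexCategory.mk q)
    (φn : ℕ → ℕ) (hφ : ∀ i : Fin (p + 1), (φ.toOrderHom i : ℕ) = φn i) (x : X.obj (.op (SimplexCategory.mk q))) :
    HV E Θ a n L p (X.map φ.op x) = Sh p n (fun i j => (φn i, L j)) (fun f => E a N (ZZ Θ N x f)) := by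
  subst h
  apply Sh_congr _ _ _ rfl
  intro f g hfg
  simp only
  rw [ZZ_comp _ _ _ _ hφ _ hfg.mono]

lemma HV_self (a : CX.A) (n : ℕ) (L : ℕ → Bool) (p N : ℕ) (h : p + n = N) (x : X.obj (.op (SimplexCategory.mk p))) :
    HV E Θ a n L p x = Sh p n (fun i j => (i, L j)) (fun f => E a N (ZZ Θ N x f)) := by
  subst h; rfl

lemma E_mul_Z (hX : IsCochainPresentation X CX E)
    (hΘ : ∀ n m (θ : m ⟶ n) x ε, Θ m (X.map θ.op x) (ε ∘ θ.toOrderHom) = X.map θ.op (Θ n x ε))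
    (i j N : ℕ) (h : N = i + j) {a b} (ha : a ∈ CX.gr i) (hb : b ∈ CX.gr j) {m : ℕ}
    (x : X.obj (.op (SimplexCategory.mk m))) (f : ℕ → ℕ × Bool) (hf : Mon N m (fun t => (f t).1)) :
    E (a * b) N (ZZ Θ N x f) = E a i (ZZ Θ i x f) * E b j (ZZ Θ j x (fun t => f (i + t))) := by
  subst h
  rw [hX.2.2.2.2.2.2.2.2.2.2.1 i j a ha b hb]
  rw [← ZZ_map hΘ _ _ x f f hf (frontHom i (i + j) (by omega)) (fun t => rfl)]
  rw [← ZZ_map hΘ _ _ x f (fun t => f (i + t)) hf (backHom j (i + j) (by omega)) (fun t => by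
    change f (i + t) = f (i + j - j + t)
    congr 2; omega)]

lemma delta_val {n : ℕ} (l : Fin (n + 2)) (s : Fin (n + 1)) :
    ((SimplexCategory.δ l).toOrderHom s : ℕ) = sk l s := by
  change ((Fin.succAbove l s : Fin (n + 2)) : ℕ) = _
  simp only [Fin.succAbove, Fin.lt_def, sk]
  split_ifs <;> simp_all

lemma E_d_Z (hX : IsCochainPresentation X CX E)
    (hΘ : ∀ n m (θ : m ⟶ n) x ε, Θ m (X.map θ.op x) (ε ∘ θ.toOrderHom) = X.map θ.op (Θ n x ε))
    (M N : ℕ) (h : M = N + 1) (a) {m : ℕ}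
    (x : X.obj (.op (SimplexCategory.mk m))) (f : ℕ → ℕ × Bool) (hf : Mon M m (fun t => (f t).1)) :
    E (CX.d a) M (ZZ Θ M x f) = bT (N + 1) (fun f => E a N (ZZ Θ N x f)) f := by
  subst h
  rw [E_d_all hX, bT, ← Fin.sum_univ_eq_sum_range (fun l => (-1) ^ l * E a N (ZZ Θ N x (fun t => f (sk l t))))]
  apply Finset.sum_congr rfl
  intro l _
  rw [← ZZ_map hΘ _ _ x f (fun t => f (sk l t)) hf (SimplexCategory.δ l) (fun t => by
    rw [delta_val])]

lemma antidiag_sum (i p n : ℕ) (G : ℕ → ℕ → k) :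
    ∑ x ∈ Finset.HasAntidiagonal.antidiagonal i, (if x.1 ≤ p ∧ x.2 ≤ n then G x.1 x.2 else 0) =
    ∑ r : Fin (n + 1), ∑ q : Fin (p + 1), if (q : ℕ) + r = i then G q r else 0 := by
  rw [Fin.sum_univ_eq_sum_range (fun r => ∑ q : Fin (p + 1), if (q : ℕ) + r = i then G q r else 0) (n + 1)]
  have : ∀ r, (∑ q : Fin (p + 1), if (q : ℕ) + r = i then G q r else 0) =
      ∑ q ∈ Finset.range (p + 1), if (q : ℕ) + r = i then G q r else 0 := fun r =>
    Fin.sum_univ_eq_sum_range (fun q => if (q : ℕ) + r = i then G q r else 0) (p + 1)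
  simp only [this]
  rw [← Finset.sum_product', ← Finset.sum_filter, ← Finset.sum_filter]
  refine Finset.sum_nbij' Prod.swap Prod.swap ?_ ?_ ?_ ?_ ?_
  · rintro ⟨u, r⟩ h
    simp only [Finset.mem_filter, Finset.HasAntidiagonal.mem_antidiagonal, Finset.mem_product,
      Finset.mem_range, Prod.swap] at h ⊢
    omega
  · rintro ⟨u, r⟩ h
    simp only [Finset.mem_filter, Finset.HasAntidiagonal.mem_antidiagonal, Finset.mem_product,
      Finset.mem_range, Prod.swap] at h ⊢
    omega
  · simp
  · simp
  · rintro ⟨u, r⟩ h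
    rfl

lemma HV_mul (hX : IsCochainPresentation X CX E)
    (hΘ : ∀ n m (θ : m ⟶ n) x ε, Θ m (X.map θ.op x) (ε ∘ θ.toOrderHom) = X.map θ.op (Θ n x ε))
    (i j : ℤ) {a b} (ha : a ∈ CX.gr i) (hb : b ∈ CX.gr j) (n : ℕ) (L : ℕ → Bool) (p : ℕ)
    (x : X.obj (.op (SimplexCategory.mk p))) :
    HV E Θ (a * b) n L p x = ∑ r : Fin (n + 1),
      ((((-1 : ℤˣ) ^ (((r : ℕ) : ℤ) * (j - ((n : ℤ) - ((r : ℕ) : ℤ)))) : ℤˣ) : ℤ) : k) *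
      ∑ q : Fin (p + 1), HV E Θ a r L q (X.map (frontHom q p (by omega)).op x) *
        HV E Θ b (n - r) (fun s => L (r + s)) (p - q) (X.map (backHom (p - q) p (by omega)).op x) := by
  rcases lt_or_ge i 0 with hi | hi
  · rw [gr_neg hX ha hi]; simp [HV_zero hX]
  rcases lt_or_ge j 0 with hj | hj
  · rw [gr_neg hX hb hj]; simp [HV_zero hX]
  lift i to ℕ using hi
  lift j to ℕ using hj
  by_cases hN : p + n = i + j
  swap
  · rw [HV_gr hX (SetLike.GradedMul.mul_mem ha hb) _ _ _ (by push_cast; omega)]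
    symm
    apply Finset.sum_eq_zero
    intro r _
    rw [Finset.sum_eq_zero, mul_zero]
    intro q _
    by_cases h1 : (q : ℕ) + r = i
    · rw [HV_gr hX hb _ _ _ (by push_cast; omega), mul_zero]
    · rw [HV_gr hX ha _ _ _ (by exact_mod_cast h1), zero_mul]
  have h1 : HV E Θ (a * b) n L p x = Sh p n (fun i j => (i, L j))
      (fun f => (fun f => E a i (ZZ Θ i x f)) f * (fun f => E b j (ZZ Θ j x f)) (fun t => f (i + t))) := by
    apply Sh_congr _ _ _ rfl
    intro f g hfg
    exact E_mul_Z hX hΘ i j _ hN ha hb _ _ hfg.mono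
  rw [h1, Sh_split i p n (by omega) _ (fun f => E a i (ZZ Θ i x f)) (fun f => E b j (ZZ Θ j x f))]
  swap
  · intro f g hfg
    exact congrArg _ (ZZ_loc _ _ _ _ hfg)
  rw [antidiag_sum i p n (fun u r => (-1) ^ (r * (p - u)) * (Sh u r (fun i j => (i, L j)) (fun f => E a i (ZZ Θ i x f)) *
          Sh (p - u) (n - r) (fun i' j' => (u + i', L (r + j'))) (fun f => E b j (ZZ Θ j x f))))]
  apply Finset.sum_congr rfl
  intro r _
  rw [Finset.mul_sum]
  apply Finset.sum_congr rfl
  intro q _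
  split_ifs with hqr
  · rw [HV_pull a r L q p i hqr _ (fun i => i) (fun i => rfl),
      HV_pull b (n - r) _ (p - q) p j (by omega) _ (fun i => q + i) (fun i => by
        change p - (p - q) + (i : ℕ) = q + i
        omega)]
    congr 1
    have : (((r : ℕ) : ℤ) * ((j : ℤ) - ((n : ℤ) - ((r : ℕ) : ℤ)))) = ((r * (p - q) : ℕ) : ℤ) := by
      have h2 : ((p - (q : ℕ) : ℕ) : ℤ) = (j : ℤ) - ((n : ℤ) - ((r : ℕ) : ℤ)) := by omega
      rw [← h2]; push_cast; rfl
    rw [this, zpow_natCast]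
    push_cast
    rfl
  · rw [HV_gr hX ha _ _ _ (by exact_mod_cast hqr), zero_mul, mul_zero]

lemma HV_d (hX : IsCochainPresentation X CX E)
    (hΘ : ∀ n m (θ : m ⟶ n) x ε, Θ m (X.map θ.op x) (ε ∘ θ.toOrderHom) = X.map θ.op (Θ n x ε))
    (N : ℕ) {a} (n : ℕ) (L : ℕ → Bool) (p : ℕ) (h : p + n = N + 1)
    (x : X.obj (.op (SimplexCategory.mk p))) :
    HV E Θ (CX.d a) n L p x = FX p n (fun i j => (i, L j)) (fun f => E a N (ZZ Θ N x f)) +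
      (-1) ^ p * FI p n (fun i j => (i, L j)) (fun f => E a N (ZZ Θ N x f)) := by
  rw [← Sh_bT N p n h]
  · apply Sh_congr _ _ _ rfl
    intro f g hfg
    exact E_d_Z hX hΘ _ _ h _ _ _ hfg.mono
  · intro f g hfg
    exact congrArg _ (ZZ_loc _ _ _ _ hfg)

lemma E_d_FX (hX : IsCochainPresentation X CX E) (N : ℕ) {a b : CX.A} (n : ℕ) (L : ℕ → Bool)
    (hb : ∀ p x, E b p x = HV E Θ a n L p x) (p : ℕ) (h : p + n = N + 1)
    (x : X.obj (.op (SimplexCategory.mk p))) :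
    E (CX.d b) p x = FX p n (fun i j => (i, L j)) (fun f => E a N (ZZ Θ N x f)) := by
  cases p with
  | zero => rw [E_d_zero hX, FX]
  | succ p =>
    rw [E_d_all hX, FX, ← Fin.sum_univ_eq_sum_range (fun l => (-1) ^ l * Sh p n (fun i j => (sk l i, L j)) (fun f => E a N (ZZ Θ N x f)))]
    apply Finset.sum_congr rfl
    intro l _
    rw [hb, HV_pull a n L p (p + 1) N (by omega) _ (sk l) (fun i => delta_val l i)]

lemma E_d_ne (hX : IsCochainPresentation X CX E) (N : ℤ) {a b : CX.A} (ha : a ∈ CX.gr N) (n : ℕ) (L : ℕ → Bool)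
    (hb : ∀ p x, E b p x = HV E Θ a n L p x) (p : ℕ) (h : (p : ℤ) + n ≠ N + 1)
    (x : X.obj (.op (SimplexCategory.mk p))) :
    E (CX.d b) p x = 0 := by
  cases p with
  | zero => rw [E_d_zero hX]
  | succ p =>
    rw [E_d_all hX]
    apply Finset.sum_eq_zero
    intro l _
    rw [hb, HV_gr hX ha _ _ _ (by push_cast at h; omega), mul_zero]

end HVs

section HH
universe u
variable {k : Type} [CommRing k] {X : SSet.{u}} {CX : DGA k}
  {E : CX.A → ∀ n : ℕ, X.obj (Opposite.op (SimplexCategory.mk n)) → k}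
  {Θ : ∀ n : SimplexCategory, X.obj (.op n) → (Fin (n.len+1) → Bool) → X.obj (.op n)}

lemma predAbove_val {n : ℕ} (i : Fin (n + 1)) (s : Fin (n + 2)) :
    ((i.predAbove s : Fin (n + 1)) : ℕ) = if (s : ℕ) ≤ (i : ℕ) then (s : ℕ) else s - 1 := by
  by_cases h : (s : ℕ) ≤ (i : ℕ)
  · rw [Fin.predAbove_of_le_castSucc i s (by simpa [Fin.le_def] using h)]
    simp [h]
  · rw [Fin.predAbove_of_castSucc_lt i s (by simp [Fin.lt_def]; omega)]
    simp [h]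

lemma exists_H (hX : IsCochainPresentation X CX E)
    (hΘ : ∀ n m (θ : m ⟶ n) x ε, Θ m (X.map θ.op x) (ε ∘ θ.toOrderHom) = X.map θ.op (Θ n x ε))
    (hΘ0 : ∀ n x, Θ n x (fun _ => false) = x) :
    ∃ H : CX.A → ∀ n, SingN unitInterval n → CX.A,
      (∀ a n σ p x, E (H a n σ) p x = HV E Θ a n (lab n σ) p x) ∧
      IsElemStrongHomotopy CX CX (fun a => a) (fun a => H a 0 const1) H := by
  have hex : ∀ (a : CX.A) (n : ℕ) (σ : SingN unitInterval n), ∃ b : CX.A, ∀ p x, E b p x = HV E Θ a n (lab n σ) p x := by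
    intro a n σ
    apply E_exists hX (fun p x => HV E Θ a n (lab n σ) p x)
    · intro p i y
      exact HV_norm hX hΘ a n _ p i y
    · obtain ⟨N, hN⟩ := E_bdd hX a
      refine ⟨N, fun p hp x => ?_⟩
      apply Sh_eq_zero
      intro f g _
      exact hN _ (by omega) _
  choose H hH using hex
  refine ⟨H, hH, ?_, ?_, ?_, ?_, ?_, ?_, ?_, ?_, ?_⟩
  · intro a b n σ
    apply E_ext hX
    intro p x
    rw [E_add hX, hH, hH, hH, HV_add hX]
  · intro c a n σ
    apply E_ext hX
    intro p x
    rw [E_smul hX, hH, hH, HV_smul hX]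
  · intro a n i τ
    apply E_ext0 hX
    intro p x
    refine (hH a (n + 1) _ p x).trans (HV_deg hX hΘ a (n + 1) _ i i.2 ?_ p x)
    refine (lab_comp _ _ _ (by omega)).trans ((lab_comp _ _ _ (by omega)).trans ?_).symm
    rw [predAbove_val, predAbove_val]
    simp
  · intro i a ha n σ
    apply mem_gr hX
    intro p hp x
    rw [hH]
    exact HV_gr hX ha _ _ _ (by omega) _
  · intro σ
    apply E_ext hX
    intro p x
    rw [hH, HV_one hX]
  · intro n σ
    apply E_ext0 hX
    intro p x
    rw [hH, HV_one' hX]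
  · intro i j a ha b hb n σ
    apply E_ext hX
    intro p x
    rw [hH, HV_mul hX hΘ i j ha hb, E_sum hX]
    apply Finset.sum_congr rfl
    intro r _
    rw [E_zsmul hX, E_mul_all hX]
    congr 1
    apply Finset.sum_congr rfl
    intro q _
    congr 1
    · refine (HV_congr a r _ _ ?_ q _).trans (hH a r _ q _).symm
      intro s hs
      exact (lab_comp (fun j : Fin ((r : ℕ) + 1) => Fin.castLE (by omega) j) σ s hs).symm
    · refine (HV_congr b (n - r) _ _ ?_ _ _).trans (hH b (n - r) _ _ _).symm
      intro s hs
      refine Eq.trans ?_ (lab_comp _ _ _ hs).symm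
      simp only
      congr 1
      omega
  · intro i a ha
    rcases lt_or_ge i 0 with hi | hi
    · have h0 : a = 0 := gr_neg hX ha hi
      have hz : ∀ n σ, H 0 n σ = 0 := by
        intro n σ
        apply E_ext0 hX
        intro p x
        rw [hH, HV_zero hX]
      subst h0
      constructor
      · intro σ
        rw [map_zero, hz, map_zero]
      · intro n σ
        rw [map_zero, hz, map_zero, Finset.sum_eq_zero, smul_zero, add_zero]
        intro l _
        exact (congrArg _ (hz n _)).trans (smul_zero _)
    lift i to ℕ using hi
    constructor
    · intro σ
      apply E_ext hX
      intro p x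
      rw [hH]
      by_cases hp : p + 0 = i + 1
      · rw [HV_d hX hΘ i 0 _ p hp, E_d_FX hX i 0 (lab 0 σ) (hH a 0 σ) p hp]
        simp [FI]
      · rw [HV_gr hX (CX.d_mem _ _ ha) _ _ _ (by push_cast; omega),
          E_d_ne hX i ha 0 (lab 0 σ) (hH a 0 σ) p (by push_cast; omega)]
    · intro n σ
      apply E_ext hX
      intro p x
      have hface : ∀ l : Fin (n + 2), E (H a n (ContinuousMap.comp σ (faceMap l))) p x =
          HV E Θ a n (fun s => lab (n + 1) σ (sk l s)) p x := by
        intro l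
        refine (hH a n _ p x).trans (HV_congr a n _ _ ?_ _ _)
        intro s hs
        refine (lab_comp _ _ _ hs).trans ?_
        congr 1
        exact delta_val l ⟨s, by omega⟩
      rw [hH, E_add hX, E_zsmul hX, E_sum hX]
      have hs : ∑ l : Fin (n + 2), E ((((-1 : ℤˣ) ^ (l : ℕ) : ℤˣ) : ℤ) • H a n (ContinuousMap.comp σ (faceMap l))) p x =
          ∑ l : Fin (n + 2), (-1) ^ (l : ℕ) * HV E Θ a n (fun s => lab (n + 1) σ (sk l s)) p x := by
        apply Finset.sum_congr rfl
        intro l _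
        rw [E_zsmul hX]
        push_cast
        exact congrArg _ (hface l)
      refine Eq.trans ?_ (congrArg (fun z => E (CX.d (H a (n + 1) σ)) p x + _ * z) hs.symm)
      by_cases hp : p + (n + 1) = i + 1
      · rw [HV_d hX hΘ i (n + 1) _ p hp, E_d_FX hX i (n + 1) (lab (n + 1) σ) (hH a (n + 1) σ) p hp]
        congr 1
        rw [show (i : ℤ) - n = ((p : ℕ) : ℤ) by omega, zpow_natCast]
        push_cast
        congr 1
        have : FI p (n + 1) (fun i j => (i, lab (n + 1) σ j)) (fun f => E a i (ZZ Θ i x f)) =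
          ∑ l ∈ Finset.range (n + 2), (-1) ^ l * Sh p n (fun i j => (i, lab (n + 1) σ (sk l j))) (fun f => E a i (ZZ Θ i x f)) := by
          cases p <;> rfl
        rw [this, ← Fin.sum_univ_eq_sum_range (fun l => (-1) ^ l * Sh p n (fun i j => (i, lab (n + 1) σ (sk l j))) (fun f => E a i (ZZ Θ i x f)))]
        apply Finset.sum_congr rfl
        intro l _
        rw [HV_self a n _ p i (by omega)]
      · rw [HV_gr hX (CX.d_mem _ _ ha) _ _ _ (by push_cast; omega),
          E_d_ne hX i ha (n + 1) (lab (n + 1) σ) (hH a (n + 1) σ) p (by push_cast; omega),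
          Finset.sum_eq_zero]
        · simp
        · intro l _
          rw [HV_gr hX ha _ _ _ (by omega), mul_zero]
  · intro a
    refine ⟨?_, rfl⟩
    apply E_ext hX
    intro p x
    rw [hH, HV_n0, lab_const0, hΘ0]

end HH

section FinalPart
universe u
variable {k : Type} [CommRing k] {X : SSet.{u}} {CX : DGA k}
  {E : CX.A → ∀ n : ℕ, X.obj (Opposite.op (SimplexCategory.mk n)) → k}
  {Θ : ∀ n : SimplexCategory, X.obj (.op n) → (Fin (n.len+1) → Bool) → X.obj (.op n)}

def IsV (v : X.obj (.op (SimplexCategory.mk 0))) {n : ℕ} (y : X.obj (.op (SimplexCategory.mk n))) : Prop :=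
  ∀ f : SimplexCategory.mk 0 ⟶ SimplexCategory.mk n, X.map f.op y = v

lemma IsV.map {v : X.obj (.op (SimplexCategory.mk 0))} {n m : ℕ} {y : X.obj (.op (SimplexCategory.mk n))}
    (h : IsV v y) (θ : SimplexCategory.mk m ⟶ SimplexCategory.mk n) : IsV v (X.map θ.op y) := by
  intro f
  rw [map_map]
  exact h _

lemma isV_zero (v y : X.obj (.op (SimplexCategory.mk 0))) : IsV v y ↔ y = v := by
  constructor
  · intro h
    rw [← h (𝟙 _), map_idd _ rfl]
  · rintro rfl f
    exact map_idd _ (hom_to_zero_eq _ _) _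

lemma IsV.theta {v : X.obj (.op (SimplexCategory.mk 0))}
    (hΘ : ∀ n m (θ : m ⟶ n) x ε, Θ m (X.map θ.op x) (ε ∘ θ.toOrderHom) = X.map θ.op (Θ n x ε))
    (hΘ0 : ∀ n x, Θ n x (fun _ => false) = x) (hΘ1 : ∀ x, Θ (.mk 0) x (fun _ => true) = v)
    {n : ℕ} {y : X.obj (.op (SimplexCategory.mk n))}
    (h : IsV v y) (ε) : IsV v (Θ (.mk n) y ε) := by
  intro f
  rw [← hΘ, h f]
  have : (ε ∘ f.toOrderHom) = fun _ => ε (f.toOrderHom 0) := by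
    funext t
    have : t = 0 := Subsingleton.elim (α := Fin 1) _ _
    rw [this]; rfl
  rw [this]
  cases ε (f.toOrderHom 0)
  · exact hΘ0 _ _
  · exact hΘ1 _

lemma isV_theta1 {v : X.obj (.op (SimplexCategory.mk 0))}
    (hΘ : ∀ n m (θ : m ⟶ n) x ε, Θ m (X.map θ.op x) (ε ∘ θ.toOrderHom) = X.map θ.op (Θ n x ε))
    (hΘ1 : ∀ x, Θ (.mk 0) x (fun _ => true) = v)
    {n : ℕ} (y : X.obj (.op (SimplexCategory.mk n))) : IsV v (Θ (.mk n) y (fun _ => true)) := by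
  intro f
  rw [← hΘ]
  exact hΘ1 _

def idl (hX : IsCochainPresentation X CX E) (v : X.obj (.op (SimplexCategory.mk 0))) : Ideal CX.A where
  carrier := {a | ∀ (n : ℕ) y, IsV v (n := n) y → E a n y = 0}
  add_mem' := by
    intro a b ha hb n y hy
    rw [E_add hX, ha n y hy, hb n y hy, add_zero]
  zero_mem' := by
    intro n y hy
    rw [E_zero hX]
  smul_mem' := by
    intro c a ha n y hy
    rw [smul_eq_mul, E_mul_all hX]
    apply Finset.sum_eq_zero
    intro p _
    rw [ha _ _ (hy.map _), mul_zero]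

lemma mem_idl (hX : IsCochainPresentation X CX E) (v : X.obj (.op (SimplexCategory.mk 0))) (a : CX.A) :
    a ∈ idl hX v ↔ ∀ (n : ℕ) y, IsV v (n := n) y → E a n y = 0 := Iff.rfl

lemma main_aux [SSet.KanComplex X] (hconn : SSetConnected X) (hX : IsCochainPresentation X CX E) :
    ∃ B : DGA k, (∀ i : ℤ, i < 0 → B.gr i = ⊥) ∧ B.gr 0 = (1 : Submodule k B.A) ∧
      StronglyHomotopyEquivalent CX B := by
  obtain ⟨v⟩ := hconn.1
  obtain ⟨Θ, hΘ, hΘ0, hΘ1⟩ := exists_theta X v (fun x => edge_of_connected X hconn x v)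
  obtain ⟨H, hHV, hH⟩ := exists_H hX hΘ hΘ0
  haveI : (idl hX v).IsTwoSided := ⟨by
    intro a b ha n y hy
    rw [E_mul_all hX]
    apply Finset.sum_eq_zero
    intro p _
    rw [ha _ _ (hy.map _), zero_mul]⟩
  obtain ⟨B, π, hs, hk, hl⟩ := exists_quot CX (idl hX v) (by
    intro a ha i n y hy
    by_cases h : (n : ℤ) = i
    · subst h
      rw [E_dec hX]
      exact ha n y hy
    · exact E_ne hX (SetLike.coe_mem _) h _) (by
    intro a ha n y hy
    cases n with
    | zero => exact E_d_zero hX _ _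
    | succ n =>
      rw [E_d_all hX]
      apply Finset.sum_eq_zero
      intro l _
      rw [ha _ _ (hy.map _), mul_zero])
  refine ⟨B, ?_, ?_, ?_⟩
  · intro i hi
    rw [eq_bot_iff]
    intro b hb
    obtain ⟨a, ha, rfl⟩ := hl i b hb
    rw [gr_neg hX ha hi, map_zero]
    exact Submodule.zero_mem _
  · apply le_antisymm
    · intro b hb
      obtain ⟨a, ha, rfl⟩ := hl 0 b hb
      have : a - algebraMap k CX.A (E a 0 v) ∈ idl hX v := by
        rw [mem_idl]
        intro n y hy
        rw [Algebra.algebraMap_eq_smul_one, E_sub hX, E_smul hX]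
        cases n with
        | zero =>
          rw [(isV_zero v y).1 hy, hX.2.2.2.2.2.2.2.2.1]
          ring
        | succ n =>
          rw [hX.2.2.2.2.2.2.2.2.2.1, E_ne hX ha (by push_cast; omega)]
          ring
      rw [← hk, map_sub, AlgHom.commutes, sub_eq_zero] at this
      rw [this]
      exact Submodule.mem_one.2 ⟨_, rfl⟩
    · intro b hb
      obtain ⟨c, rfl⟩ := Submodule.mem_one.1 hb
      rw [Algebra.algebraMap_eq_smul_one]
      exact Submodule.smul_mem _ _ SetLike.GradedOne.one_mem
  · apply equiv_of_homotopy CX B π hs hl H hH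
    · intro a ha n σ
      rw [hk] at ha ⊢
      intro p y hy
      rw [hHV]
      apply Sh_eq_zero
      intro f g _
      exact ha _ _ ((hy.map _).theta hΘ hΘ0 hΘ1 _)
    · intro a ha
      rw [hk] at ha
      apply E_ext0 hX
      intro p y
      rw [hHV, HV_n0, lab_const1]
      exact ha _ _ (isV_theta1 hΘ hΘ1 y)

end FinalPart

/-- **Theorem.** Let `X` be a connected Kan simplicial set.  Then the (pseudo-compact)
normalized cochain dg algebra `C*(X)` is strongly homotopy equivalent to a connected
dg algebra (a non-negatively graded one whose degree-`0` part is `k`). -/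
theorem cochains_of_connected_kan_sset_strongly_homotopy_equivalent_to_connected
    {k : Type} [CommRing k] (X : SSet) [SSet.KanComplex X] (hconn : SSetConnected X)
    (CX : DGA k)
    (EX : CX.A → ∀ n : ℕ, X.obj (Opposite.op (SimplexCategory.mk n)) → k)
    (hX : IsCochainPresentation X CX EX) :
    ∃ B : DGA k, (∀ i : ℤ, i < 0 → B.gr i = ⊥) ∧ B.gr 0 = (1 : Submodule k B.A) ∧
      StronglyHomotopyEquivalent CX B := by
  exact main_aux hconn hX
end
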